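/- Let d ≥ 2, let Σ ⊂ GL_d(ℝ) be a compact subset, and let μ₀ be a Borel probability measure supported in Σ which is quasi-irreducible and satisfies L_1(μ₀) > L_2(μ₀). Then there exist α ∈ (0,1], θ > 1, C > 0 and ε > 0 such that for every Borel probability measure μ supported in Σ with ‖μ − μ₀‖_TV < ε, every n ≥ 1 and every α-Hölder φ : ℙ(ℝ^d) → ℝ, v_α(Q_μ^n φ) ≤ C θ^{−n} v_α(φ). -/

import Mathlib

open MeasureTheory Filter
open scoped LinearAlgebra.Projectivization

noncomputable section

abbrev GLd (d : ℕ) := GL (Fin d) ℝ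
abbrev Ed (d : ℕ) := EuclideanSpace ℝ (Fin d)
abbrev Pd (d : ℕ) := ℙ ℝ (Ed d)

variable {d : ℕ}

instance : MeasurableSpace (GLd d) := borel _
instance : BorelSpace (GLd d) := ⟨rfl⟩

instance : TopologicalSpace (Pd d) :=
  (instTopologicalSpaceQuotient : TopologicalSpace (Quotient (projectivizationSetoid ℝ (Ed d))))
instance : MeasurableSpace (Pd d) := borel _
instance : BorelSpace (Pd d) := ⟨rfl⟩

/-- The continuous linear map on Euclidean space induced by `g ∈ GL_d(ℝ)`. -/
def glCLM (g : GLd d) : Ed d →L[ℝ] Ed d :=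
  Matrix.toEuclideanCLM (𝕜 := ℝ) (g : Matrix (Fin d) (Fin d) ℝ)

/-- The operator norm of `g ∈ GL_d(ℝ)`. -/
def gnorm (g : GLd d) : ℝ := ‖glCLM g‖

lemma glCLM_leftInv (g : GLd d) (v : Ed d) : glCLM g⁻¹ (glCLM g v) = v := by
  have h : glCLM (d := d) g⁻¹ * glCLM g = 1 := by
    rw [glCLM, glCLM, ← map_mul]
    norm_cast
    rw [inv_mul_cancel g]
    exact map_one _
  calc glCLM g⁻¹ (glCLM g v) = (glCLM g⁻¹ * glCLM g) v := rfl
    _ = v := by rw [h]; rfl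

lemma glLinear_injective (g : GLd d) : Function.Injective (glCLM g).toLinearMap :=
  Function.LeftInverse.injective (g := (glCLM g⁻¹)) (fun v => glCLM_leftInv g v)

/-- The projective action of `g ∈ GL_d(ℝ)` on `ℙ(ℝ^d)`. -/
def pact (g : GLd d) : Pd d → Pd d :=
  Projectivization.map (glCLM g).toLinearMap (glLinear_injective g)

/-- The projective distance `δ` on `ℙ(ℝ^d)`, computed on representatives. -/
def pdelta (x y : Pd d) : ℝ :=
  Real.sqrt (‖x.rep‖ ^ 2 * ‖y.rep‖ ^ 2 - (inner ℝ x.rep y.rep : ℝ) ^ 2) /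
    (‖x.rep‖ * ‖y.rep‖)

/-- Convolution of two measures on `GL_d(ℝ)`. -/
def mconv (μ ν : Measure (GLd d)) : Measure (GLd d) :=
  (μ.prod ν).map (fun p => p.1 * p.2)

/-- `n`-fold convolution power of a measure on `GL_d(ℝ)`. -/
def mconvN (μ : Measure (GLd d)) : ℕ → Measure (GLd d)
  | 0 => Measure.dirac 1
  | n + 1 => if n = 0 then μ else mconv (mconvN μ n) μ

/-- The top Lyapunov exponent of a (compactly supported) measure on `GL_d(ℝ)`. -/
def L1 (μ : Measure (GLd d)) : ℝ :=
  limUnder atTop (fun n : ℕ => (n : ℝ)⁻¹ * ∫ g, Real.log (gnorm g) ∂(mconvN μ n))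

/-- `N₂ g = s₁(g)s₂(g)`, the product of the two largest singular values. -/
def N2 (g : GLd d) : ℝ :=
  sSup { x | ∃ p q : Ed d, ‖p‖ = 1 ∧ ‖q‖ = 1 ∧ (inner ℝ p q : ℝ) = 0 ∧
    x = Real.sqrt (‖glCLM g p‖ ^ 2 * ‖glCLM g q‖ ^ 2 -
      (inner ℝ (glCLM g p) (glCLM g q) : ℝ) ^ 2) }

/-- `L₁(μ) + L₂(μ)`. -/
def L12 (μ : Measure (GLd d)) : ℝ :=
  limUnder atTop (fun n : ℕ => (n : ℝ)⁻¹ * ∫ g, Real.log (N2 g) ∂(mconvN μ n))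

/-- The second Lyapunov exponent. -/
def L2 (μ : Measure (GLd d)) : ℝ := L12 μ - L1 μ

/-- The top Lyapunov exponent of the restriction of `μ` to an (invariant) subspace `V`. -/
def L1rest (μ : Measure (GLd d)) (V : Submodule ℝ (Ed d)) : ℝ :=
  limUnder atTop (fun n : ℕ => (n : ℝ)⁻¹ *
    ∫ g, Real.log ‖LinearMap.toContinuousLinearMap ((glCLM g).toLinearMap.domRestrict V)‖
      ∂(mconvN μ n))

/-- Quasi-irreducibility of a measure on `GL_d(ℝ)`. -/
def QuasiIrreducible (μ : Measure (GLd d)) : Prop :=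
  ¬ ∃ V : Submodule ℝ (Ed d), V ≠ ⊥ ∧ V ≠ ⊤ ∧
    (∀ᵐ g ∂μ, V.map (glCLM g).toLinearMap = V) ∧ L1rest μ V < L1 μ

/-- Irreducibility of a measure on `GL_d(ℝ)`. -/
def Irred (μ : Measure (GLd d)) : Prop :=
  ¬ ∃ V : Submodule ℝ (Ed d), V ≠ ⊥ ∧ V ≠ ⊤ ∧
    (∀ᵐ g ∂μ, V.map (glCLM g).toLinearMap = V)

/-- The Markov operator associated with a measure on `GL_d(ℝ)`. -/
def Qop (μ : Measure (GLd d)) (φ : Pd d → ℝ) : Pd d → ℝ :=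
  fun v => ∫ g, φ (pact g v) ∂μ

/-- The average `α`-Hölder constant of a measure on `GL_d(ℝ)`. -/
def kalpha (α : ℝ) (μ : Measure (GLd d)) : ℝ :=
  sSup { x | ∃ v₁ v₂ : Pd d, v₁ ≠ v₂ ∧
    x = ∫ g, (pdelta (pact g v₁) (pact g v₂) / pdelta v₁ v₂) ^ α ∂μ }

/-- The `α`-Hölder seminorm of an observable on `ℙ(ℝ^d)`. -/
def valpha (α : ℝ) (φ : Pd d → ℝ) : ℝ :=
  sSup { x | ∃ v₁ v₂ : Pd d, v₁ ≠ v₂ ∧ x = |φ v₁ - φ v₂| / pdelta v₁ v₂ ^ α }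

/-- `φ` is `α`-Hölder: `v_α(φ) < ∞`. -/
def IsHolder (α : ℝ) (φ : Pd d → ℝ) : Prop :=
  BddAbove { x | ∃ v₁ v₂ : Pd d, v₁ ≠ v₂ ∧ x = |φ v₁ - φ v₂| / pdelta v₁ v₂ ^ α }

/-- The total variation distance between two finite measures. -/
def tvDist (μ ν : Measure (GLd d)) [IsFiniteMeasure μ] [IsFiniteMeasure ν] : ℝ :=
  ((μ.toSignedMeasure - ν.toSignedMeasure).totalVariation Set.univ).toReal

/-- A measure is compactly supported. -/
def CompactlySupported (μ : Measure (GLd d)) : Prop :=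
  ∃ K : Set (GLd d), IsCompact K ∧ μ Kᶜ = 0

/-- `S` is the (topological) support of `μ`. -/
def IsSupport (μ : Measure (GLd d)) (S : Set (GLd d)) : Prop :=
  μ Sᶜ = 0 ∧ ∀ x ∈ S, ∀ U : Set (GLd d), IsOpen U → x ∈ U → 0 < μ U

/-- A measure `η` on `ℙ(ℝ^d)` is `μ`-stationary. -/
def Stationary (μ : Measure (GLd d)) (η : Measure (Pd d)) : Prop :=
  ∀ φ : Pd d → ℝ, Continuous φ → (∃ C, ∀ v, |φ v| ≤ C) →
    ∫ v, φ v ∂η = ∫ g, ∫ v, φ (pact g v) ∂η ∂μ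

/-!
Let `β` be the limit of the least mean growth `min_v E log (‖g v‖ / ‖v‖) / n` over `n` steps.
Compactness of the sphere gives a vector whose mean growth never exceeds `n β`, and exponential
bounds on lower deviations below `β` show that its growth does not exceed `n β` on the upper side
either, to first order and in mean. The vectors with this property along a suitable sequence of
times form a nonzero invariant subspace on which the top exponent is at most `β`. Hence
quasi-irreducibility forces `L₁ ≤ β`: every direction grows in mean at rate `L₁`, uniformly.

The action of `g` multiplies `δ(v̂, ŵ)` by at most `s₁ s₂ ‖v‖ ‖w‖ / (‖g v‖ ‖g w‖)`. By the gap
`L₂ < L₁` the logarithm of this factor has, after sufficiently many steps, a negative mean which is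
uniform in `v` and `w`. Expanding `exp (α x)` to second order for small `α` gives
`E δ(ĝ v̂, ĝ ŵ) ^ α ≤ κ δ(v̂, ŵ) ^ α` with `κ < 1`. As `g` ranges over a bounded set, this survives
small perturbations of the law in total variation; being submultiplicative in time, it decays
exponentially, and averaging it against an observable contracts `v_α`.
-/

open scoped ENNReal Topology

/-! ### The linear action -/

instance : SecondCountableTopology (GLd d) := by
  have : SecondCountableTopology (Matrix (Fin d) (Fin d) ℝ) :=
    inferInstanceAs (SecondCountableTopology (Fin d → Fin d → ℝ))
  have : SecondCountableTopology (Matrix (Fin d) (Fin d) ℝ)ᵐᵒᵖ :=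
    MulOpposite.opHomeomorph.symm.isInducing.secondCountableTopology
  exact Units.isEmbedding_embedProduct.secondCountableTopology

instance : MeasurableMul₂ (GLd d) := ContinuousMul.measurableMul₂

lemma glCLM_one : glCLM (1 : GLd d) = 1 := by simp [glCLM]

lemma glCLM_mul (g h : GLd d) : glCLM (g * h) = glCLM g * glCLM h := by simp [glCLM]

lemma glCLM_mul_apply (g h : GLd d) (v : Ed d) : glCLM (g * h) v = glCLM g (glCLM h v) := by
  rw [glCLM_mul]; rfl

lemma glCLM_ne_zero (g : GLd d) {v : Ed d} (hv : v ≠ 0) : glCLM g v ≠ 0 :=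
  (map_ne_zero_iff _ (glLinear_injective g)).2 hv

lemma norm_glCLM_pos (g : GLd d) {v : Ed d} (hv : v ≠ 0) : 0 < ‖glCLM g v‖ :=
  norm_pos_iff.2 (glCLM_ne_zero g hv)

lemma continuous_glCLM : Continuous (glCLM : GLd d → Ed d →L[ℝ] Ed d) :=
  (Matrix.toEuclideanCLM (n := Fin d) (𝕜 := ℝ)).toAlgEquiv.toLinearMap
    |>.continuous_of_finiteDimensional.comp Units.continuous_val

lemma continuous_glCLM_apply (v : Ed d) : Continuous fun g : GLd d => glCLM g v :=
  continuous_glCLM.clm_apply continuous_const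

lemma continuous_gnorm : Continuous (gnorm : GLd d → ℝ) := continuous_glCLM.norm

lemma gnorm_nonneg (g : GLd d) : 0 ≤ gnorm g := norm_nonneg _

lemma gnorm_mul_le (g h : GLd d) : gnorm (g * h) ≤ gnorm g * gnorm h := by
  rw [gnorm, glCLM_mul]
  exact norm_mul_le _ _

lemma norm_glCLM_le (g : GLd d) (v : Ed d) : ‖glCLM g v‖ ≤ gnorm g * ‖v‖ :=
  (glCLM g).le_opNorm v

lemma norm_le_gnorm_inv_mul (g : GLd d) (v : Ed d) : ‖v‖ ≤ gnorm g⁻¹ * ‖glCLM g v‖ := by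
  simpa only [glCLM_leftInv] using norm_glCLM_le g⁻¹ (glCLM g v)

/-- The size of `g` in `GL_d(ℝ)`: both `g` and `g⁻¹` have operator norm at most `R`. -/
def NormBound (R : ℝ) (g : GLd d) : Prop := gnorm g ≤ R ∧ gnorm g⁻¹ ≤ R

namespace NormBound

variable {R T : ℝ} {g h : GLd d}

lemma nonneg (hg : NormBound R g) : 0 ≤ R := (gnorm_nonneg g).trans hg.1

lemma mul (hg : NormBound R g) (hh : NormBound T h) : NormBound (R * T) (g * h) := by
  refine ⟨(gnorm_mul_le _ _).trans (mul_le_mul hg.1 hh.1 (gnorm_nonneg _) hg.nonneg), ?_⟩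
  rw [mul_inv_rev, mul_comm R T]
  exact (gnorm_mul_le _ _).trans (mul_le_mul hh.2 hg.2 (gnorm_nonneg _) hh.nonneg)

lemma norm_glCLM_le (hg : NormBound R g) (v : Ed d) : ‖glCLM g v‖ ≤ R * ‖v‖ :=
  (_root_.norm_glCLM_le g v).trans (by gcongr; exact hg.1)

lemma norm_le (hg : NormBound R g) (v : Ed d) : ‖v‖ ≤ R * ‖glCLM g v‖ :=
  (norm_le_gnorm_inv_mul g v).trans (by gcongr; exact hg.2)

lemma one_le [NeZero d] (hg : NormBound R g) : 1 ≤ R := by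
  obtain ⟨v, hv⟩ := exists_ne (0 : Ed d)
  have hRR : ‖v‖ ≤ R * (R * ‖v‖) :=
    (hg.norm_le v).trans (mul_le_mul_of_nonneg_left (hg.norm_glCLM_le v) hg.nonneg)
  by_contra! hR
  nlinarith [norm_pos_iff.2 hv, hg.nonneg, mul_nonneg hg.nonneg (norm_nonneg v)]

end NormBound

lemma measurableSet_normBound (R : ℝ) : MeasurableSet {g : GLd d | NormBound R g} :=
  ((isClosed_le continuous_gnorm continuous_const).inter
    (isClosed_le (continuous_gnorm.comp continuous_inv) continuous_const)).measurableSet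

lemma exists_normBound_of_isCompact {S : Set (GLd d)} (hS : IsCompact S) :
    ∃ R : ℝ, ∀ g ∈ S, NormBound R g := by
  obtain ⟨a, ha⟩ := (hS.image continuous_gnorm).bddAbove
  obtain ⟨b, hb⟩ := (hS.image (continuous_gnorm.comp continuous_inv)).bddAbove
  exact ⟨max a b, fun g hg => ⟨(ha ⟨g, hg, rfl⟩).trans (le_max_left _ _),
    (hb ⟨g, hg, rfl⟩).trans (le_max_right _ _)⟩⟩

/-- The logarithmic growth of `v` under `g`. It is an additive cocycle, which makes it invariant
under rescaling `v`; the junk value `log 0 = 0` gives `logGrowth g 0 = 0`. -/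
def logGrowth (g : GLd d) (v : Ed d) : ℝ := Real.log ‖glCLM g v‖ - Real.log ‖v‖

lemma logGrowth_mul (g h : GLd d) (v : Ed d) :
    logGrowth (g * h) v = logGrowth g (glCLM h v) + logGrowth h v := by
  simp only [logGrowth, glCLM_mul_apply]
  ring

lemma logGrowth_smul (g : GLd d) {c : ℝ} (hc : c ≠ 0) (v : Ed d) :
    logGrowth g (c • v) = logGrowth g v := by
  rcases eq_or_ne v 0 with rfl | hv
  · simp
  have hgv := norm_glCLM_pos g hv
  simp only [logGrowth, map_smul, norm_smul]
  rw [Real.log_mul (norm_ne_zero_iff.2 hc) hgv.ne',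
    Real.log_mul (norm_ne_zero_iff.2 hc) (norm_ne_zero_iff.2 hv)]
  ring

lemma exp_logGrowth (g : GLd d) {v : Ed d} (hv : v ≠ 0) :
    Real.exp (logGrowth g v) = ‖glCLM g v‖ / ‖v‖ := by
  rw [logGrowth, Real.exp_sub, Real.exp_log (norm_glCLM_pos g hv), Real.exp_log (norm_pos_iff.2 hv)]

lemma NormBound.abs_logGrowth_le {R : ℝ} {g : GLd d} (hg : NormBound R g) {v : Ed d}
    (hv : v ≠ 0) : |logGrowth g v| ≤ Real.log R := by
  have hv' : 0 < ‖v‖ := norm_pos_iff.2 hv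
  have hgv := norm_glCLM_pos g hv
  have hR : 0 < R := pos_of_mul_pos_left (hv'.trans_le (hg.norm_le v)) hgv.le
  have upper := Real.log_le_log hgv (hg.norm_glCLM_le v)
  have lower := Real.log_le_log hv' (hg.norm_le v)
  rw [Real.log_mul hR.ne' hv'.ne'] at upper
  rw [Real.log_mul hR.ne' hgv.ne'] at lower
  rw [logGrowth, abs_le]
  constructor <;> linarith

lemma measurable_logGrowth_left (v : Ed d) : Measurable fun g : GLd d => logGrowth g v :=
  ((continuous_glCLM_apply v).norm.measurable.log).sub_const _

/-! ### Area and projective distance -/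

section WedgeNorm

variable {E : Type*} [NormedAddCommGroup E] [InnerProductSpace ℝ E]

/-- The norm `‖p ∧ q‖` of the exterior product of two vectors, that is the area of the parallelogram
they span. -/
def wedgeNorm (p q : E) : ℝ := √(‖p‖ ^ 2 * ‖q‖ ^ 2 - (inner ℝ p q : ℝ) ^ 2)

lemma wedgeNorm_nonneg (p q : E) : 0 ≤ wedgeNorm p q := Real.sqrt_nonneg _

lemma wedgeNorm_le (p q : E) : wedgeNorm p q ≤ ‖p‖ * ‖q‖ := by
  refine Real.sqrt_le_iff.2 ⟨by positivity, ?_⟩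
  rw [mul_pow]
  exact sub_le_self _ (sq_nonneg _)

lemma wedgeNorm_of_inner_eq_zero {p q : E} (h : (inner ℝ p q : ℝ) = 0) :
    wedgeNorm p q = ‖p‖ * ‖q‖ := by
  rw [wedgeNorm, h, ← mul_pow, zero_pow two_ne_zero, sub_zero, Real.sqrt_sq (by positivity)]

@[simp] lemma wedgeNorm_zero_left (q : E) : wedgeNorm 0 q = 0 := by simp [wedgeNorm]

@[simp] lemma wedgeNorm_zero_right (p : E) : wedgeNorm p 0 = 0 := by simp [wedgeNorm]

lemma wedgeNorm_smul_smul (a b : ℝ) (p q : E) :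
    wedgeNorm (a • p) (b • q) = |a| * |b| * wedgeNorm p q := by
  rw [wedgeNorm, wedgeNorm, ← abs_mul, ← Real.sqrt_sq_eq_abs, ← Real.sqrt_mul (sq_nonneg _)]
  simp only [norm_smul, inner_smul_left, inner_smul_right, Real.norm_eq_abs, mul_pow, sq_abs,
    RCLike.conj_to_real]
  ring_nf

lemma wedgeNorm_smul_add_right (c : ℝ) (p r : E) : wedgeNorm p (c • p + r) = wedgeNorm p r := by
  rw [wedgeNorm, wedgeNorm, norm_add_sq_real, inner_add_right, inner_smul_right, inner_smul_left,
    norm_smul, mul_pow, real_inner_self_eq_norm_sq, Real.norm_eq_abs, sq_abs]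
  simp only [RCLike.conj_to_real]
  ring_nf

lemma exists_eq_smul_of_wedgeNorm_eq_zero {p q : E} (hp : p ≠ 0) (h : wedgeNorm p q = 0) :
    ∃ r : ℝ, q = r • p := by
  have cauchySchwarz : (inner ℝ p q : ℝ) ^ 2 ≤ (‖p‖ * ‖q‖) ^ 2 :=
    sq_le_sq.2 ((abs_real_inner_le_norm p q).trans (le_abs_self _))
  rw [wedgeNorm, ← mul_pow, Real.sqrt_eq_zero (sub_nonneg.2 cauchySchwarz), sub_eq_zero,
    sq_eq_sq_iff_abs_eq_abs, abs_of_nonneg (by positivity), eq_comm] at h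
  have parallel : p = 0 ∨ ∃ r : ℝ, q = r • p := ((norm_inner_eq_norm_tfae ℝ p q).out 0 2).1 h
  exact parallel.resolve_left hp

lemma continuous_wedgeNorm {X : Type*} [TopologicalSpace X] {f k : X → E} (hf : Continuous f)
    (hk : Continuous k) : Continuous fun x => wedgeNorm (f x) (k x) :=
  (((hf.norm.pow 2).mul (hk.norm.pow 2)).sub ((hf.inner hk).pow 2)).sqrt

end WedgeNorm

lemma wedgeNorm_glCLM_le_sq (g : GLd d) {p q : Ed d} (hp : ‖p‖ = 1) (hq : ‖q‖ = 1) :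
    wedgeNorm (glCLM g p) (glCLM g q) ≤ gnorm g ^ 2 := by
  have hgp := norm_glCLM_le g p
  have hgq := norm_glCLM_le g q
  rw [hp, mul_one] at hgp
  rw [hq, mul_one] at hgq
  rw [sq]
  exact (wedgeNorm_le _ _).trans (mul_le_mul hgp hgq (norm_nonneg _) (gnorm_nonneg _))

lemma wedgeNorm_le_N2 (g : GLd d) {p q : Ed d} (hp : ‖p‖ = 1) (hq : ‖q‖ = 1)
    (hpq : (inner ℝ p q : ℝ) = 0) : wedgeNorm (glCLM g p) (glCLM g q) ≤ N2 g := by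
  refine le_csSup ⟨gnorm g ^ 2, ?_⟩ ⟨p, q, hp, hq, hpq, rfl⟩
  rintro _ ⟨p, q, hp, hq, -, rfl⟩
  exact wedgeNorm_glCLM_le_sq g hp hq

lemma N2_le_of_forall {g : GLd d} {c : ℝ} (hc : 0 ≤ c)
    (h : ∀ p q : Ed d, ‖p‖ = 1 → ‖q‖ = 1 → (inner ℝ p q : ℝ) = 0 →
      wedgeNorm (glCLM g p) (glCLM g q) ≤ c) : N2 g ≤ c := by
  refine Real.sSup_le ?_ hc
  rintro _ ⟨p, q, hp, hq, hpq, rfl⟩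
  exact h p q hp hq hpq

lemma N2_nonneg (g : GLd d) : 0 ≤ N2 g := by
  refine Real.sSup_nonneg ?_
  rintro _ ⟨p, q, -, -, -, rfl⟩
  exact Real.sqrt_nonneg _

lemma N2_le_gnorm_sq (g : GLd d) : N2 g ≤ gnorm g ^ 2 :=
  N2_le_of_forall (sq_nonneg _) fun _ _ hp hq _ => wedgeNorm_glCLM_le_sq g hp hq

lemma wedgeNorm_glCLM_le (g : GLd d) (p q : Ed d) :
    wedgeNorm (glCLM g p) (glCLM g q) ≤ N2 g * wedgeNorm p q := by
  rcases eq_or_ne p 0 with rfl | hp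
  · simp
  have hp0 : ‖p‖ ≠ 0 := norm_ne_zero_iff.2 hp
  obtain ⟨c, r, rfl, hpr⟩ : ∃ (c : ℝ) (r : Ed d), q = c • p + r ∧ (inner ℝ p r : ℝ) = 0 := by
    refine ⟨inner ℝ p q / ‖p‖ ^ 2, q - (inner ℝ p q / ‖p‖ ^ 2 : ℝ) • p, by abel, ?_⟩
    rw [inner_sub_right, inner_smul_right, real_inner_self_eq_norm_sq,
      div_mul_cancel₀ _ (pow_ne_zero 2 hp0), sub_self]
  rw [map_add, map_smul, wedgeNorm_smul_add_right, wedgeNorm_smul_add_right,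
    wedgeNorm_of_inner_eq_zero hpr]
  rcases eq_or_ne r 0 with rfl | hr
  · simp
  have hr0 : ‖r‖ ≠ 0 := norm_ne_zero_iff.2 hr
  have unit : wedgeNorm (glCLM g (‖p‖⁻¹ • p)) (glCLM g (‖r‖⁻¹ • r)) ≤ N2 g :=
    wedgeNorm_le_N2 g (norm_smul_inv_norm hp) (norm_smul_inv_norm hr)
      (by rw [inner_smul_left, inner_smul_right, hpr, mul_zero, mul_zero])
  rw [map_smul, map_smul, wedgeNorm_smul_smul, abs_of_nonneg (by positivity),
    abs_of_nonneg (by positivity)] at unit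
  calc wedgeNorm (glCLM g p) (glCLM g r)
      = (‖p‖⁻¹ * ‖r‖⁻¹ * wedgeNorm (glCLM g p) (glCLM g r)) * (‖p‖ * ‖r‖) := by field_simp
    _ ≤ N2 g * (‖p‖ * ‖r‖) := by gcongr

lemma N2_mul_le (g h : GLd d) : N2 (g * h) ≤ N2 g * N2 h := by
  refine N2_le_of_forall (mul_nonneg (N2_nonneg _) (N2_nonneg _)) fun p q hp hq hpq => ?_
  rw [glCLM_mul_apply, glCLM_mul_apply]
  exact (wedgeNorm_glCLM_le _ _ _).trans
    (mul_le_mul_of_nonneg_left (wedgeNorm_le_N2 h hp hq hpq) (N2_nonneg _))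

lemma one_le_N2_one (hd : 2 ≤ d) : 1 ≤ N2 (1 : GLd d) := by
  let i : Fin d := ⟨0, by omega⟩
  let j : Fin d := ⟨1, by omega⟩
  let e : Fin d → Ed d := fun k => EuclideanSpace.single k 1
  have orthogonal : (inner ℝ (e i) (e j) : ℝ) = 0 := by
    simp [e, i, j, EuclideanSpace.inner_single_left]
  have unit (k : Fin d) : ‖e k‖ = 1 := by simp [e]
  have h := wedgeNorm_le_N2 1 (unit i) (unit j) orthogonal
  simpa [glCLM_one, wedgeNorm_of_inner_eq_zero orthogonal, unit] using h

lemma one_le_N2_mul_gnorm_inv_sq (hd : 2 ≤ d) (g : GLd d) : 1 ≤ N2 g * gnorm g⁻¹ ^ 2 :=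
  calc (1 : ℝ) ≤ N2 (g * g⁻¹) := by rw [mul_inv_cancel]; exact one_le_N2_one hd
    _ ≤ N2 g * N2 g⁻¹ := N2_mul_le _ _
    _ ≤ N2 g * gnorm g⁻¹ ^ 2 := mul_le_mul_of_nonneg_left (N2_le_gnorm_sq _) (N2_nonneg _)

lemma N2_pos (hd : 2 ≤ d) (g : GLd d) : 0 < N2 g :=
  pos_of_mul_pos_left (one_pos.trans_le (one_le_N2_mul_gnorm_inv_sq hd g)) (sq_nonneg _)

lemma NormBound.N2_le {R : ℝ} {g : GLd d} (hg : NormBound R g) : N2 g ≤ R ^ 2 :=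
  (N2_le_gnorm_sq g).trans (pow_le_pow_left₀ (gnorm_nonneg _) hg.1 2)

lemma NormBound.abs_log_N2_le (hd : 2 ≤ d) {R : ℝ} {g : GLd d} (hg : NormBound R g) :
    |Real.log (N2 g)| ≤ 2 * Real.log R := by
  have hN := N2_pos hd g
  have lower : 1 ≤ N2 g * R ^ 2 := (one_le_N2_mul_gnorm_inv_sq hd g).trans
    (mul_le_mul_of_nonneg_left (pow_le_pow_left₀ (gnorm_nonneg _) hg.2 2) hN.le)
  have hR : R ^ 2 ≠ 0 := by
    intro h
    norm_num [h] at lower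
  have log_upper := Real.log_le_log hN hg.N2_le
  have log_lower := Real.log_nonneg lower
  rw [Real.log_mul hN.ne' hR] at log_lower
  rw [Real.log_pow, Nat.cast_ofNat] at log_upper log_lower
  rw [abs_le]
  constructor <;> linarith

lemma lowerSemicontinuous_N2 : LowerSemicontinuous (N2 : GLd d → ℝ) := by
  intro g a ha
  rcases lt_or_ge a 0 with ha0 | ha0
  · exact Eventually.of_forall fun h => ha0.trans_le (N2_nonneg h)
  obtain ⟨p, q, hp, hq, hpq, hlt⟩ : ∃ p q : Ed d, ‖p‖ = 1 ∧ ‖q‖ = 1 ∧ (inner ℝ p q : ℝ) = 0 ∧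
      a < wedgeNorm (glCLM g p) (glCLM g q) := by
    by_contra! h
    exact ha.not_ge (N2_le_of_forall ha0 h)
  have hcont := continuous_wedgeNorm (continuous_glCLM_apply p) (continuous_glCLM_apply q)
  filter_upwards [hcont.continuousAt.eventually (lt_mem_nhds hlt)] with h hh
  exact hh.trans_le (wedgeNorm_le_N2 h hp hq hpq)

lemma pdelta_mk {v w : Ed d} (hv : v ≠ 0) (hw : w ≠ 0) :
    pdelta (Projectivization.mk ℝ v hv) (Projectivization.mk ℝ w hw) =
      wedgeNorm v w / (‖v‖ * ‖w‖) := by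
  obtain ⟨a, ha⟩ := Projectivization.exists_smul_eq_mk_rep ℝ v hv
  obtain ⟨b, hb⟩ := Projectivization.exists_smul_eq_mk_rep ℝ w hw
  have ha₀ : |(a : ℝ)| ≠ 0 := abs_ne_zero.2 a.ne_zero
  have hb₀ : |(b : ℝ)| ≠ 0 := abs_ne_zero.2 b.ne_zero
  change wedgeNorm _ _ / _ = _
  rw [← ha, ← hb, Units.smul_def, Units.smul_def, wedgeNorm_smul_smul, norm_smul, norm_smul,
    Real.norm_eq_abs, Real.norm_eq_abs, mul_mul_mul_comm,
    mul_div_mul_left _ _ (mul_ne_zero ha₀ hb₀)]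

lemma pact_one (x : Pd d) : pact 1 x = x := by
  induction x using Projectivization.ind with
  | h v hv => simp only [pact, Projectivization.map_mk, ContinuousLinearMap.coe_coe, glCLM_one,
      one_apply_eq_self]

lemma pact_mul (g h : GLd d) (x : Pd d) : pact (g * h) x = pact g (pact h x) := by
  induction x using Projectivization.ind with
  | h v hv => simp only [pact, Projectivization.map_mk, ContinuousLinearMap.coe_coe,
      glCLM_mul_apply]

lemma pdelta_pact (g h : GLd d) (x y : Pd d) :
    pdelta (pact g x) (pact h y) =
      wedgeNorm (glCLM g x.rep) (glCLM h y.rep) / (‖glCLM g x.rep‖ * ‖glCLM h y.rep‖) := by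
  conv_lhs => rw [← x.mk_rep, ← y.mk_rep]
  exact pdelta_mk (glCLM_ne_zero g x.rep_nonzero) (glCLM_ne_zero h y.rep_nonzero)

lemma pdelta_nonneg (x y : Pd d) : 0 ≤ pdelta x y :=
  div_nonneg (wedgeNorm_nonneg _ _) (by positivity)

lemma pdelta_le_one (x y : Pd d) : pdelta x y ≤ 1 :=
  div_le_one_of_le₀ (wedgeNorm_le _ _) (by positivity)

lemma pdelta_self (x : Pd d) : pdelta x x = 0 := by
  simp [pdelta, ← sq]

lemma eq_of_pdelta_eq_zero {x y : Pd d} (h : pdelta x y = 0) : x = y := by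
  have hx := norm_ne_zero_iff.2 x.rep_nonzero
  have hy := norm_ne_zero_iff.2 y.rep_nonzero
  obtain ⟨r, hr⟩ := exists_eq_smul_of_wedgeNorm_eq_zero x.rep_nonzero
    ((div_eq_zero_iff.1 h).resolve_right (mul_ne_zero hx hy))
  rw [← x.mk_rep, ← y.mk_rep, eq_comm, Projectivization.mk_eq_mk_iff']
  exact ⟨r, hr.symm⟩

lemma pdelta_pos {x y : Pd d} (h : x ≠ y) : 0 < pdelta x y :=
  (pdelta_nonneg x y).lt_of_ne fun h₀ => h (eq_of_pdelta_eq_zero h₀.symm)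

lemma continuous_pdelta_pact {X : Type*} [TopologicalSpace X] {f k : X → GLd d}
    (hf : Continuous f) (hk : Continuous k) (x y : Pd d) :
    Continuous fun t => pdelta (pact (f t) x) (pact (k t) y) := by
  simp only [pdelta_pact]
  have hfx := (continuous_glCLM_apply x.rep).comp hf
  have hky := (continuous_glCLM_apply y.rep).comp hk
  exact (continuous_wedgeNorm hfx hky).div (hfx.norm.mul hky.norm) fun t =>
    (mul_pos (norm_glCLM_pos _ x.rep_nonzero) (norm_glCLM_pos _ y.rep_nonzero)).ne'

lemma pdelta_pact_le (g : GLd d) (x y : Pd d) :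
    pdelta (pact g x) (pact g y) ≤
      N2 g * (‖x.rep‖ / ‖glCLM g x.rep‖) * (‖y.rep‖ / ‖glCLM g y.rep‖) * pdelta x y := by
  have hx := norm_pos_iff.2 x.rep_nonzero
  have hy := norm_pos_iff.2 y.rep_nonzero
  have hgx := norm_glCLM_pos g x.rep_nonzero
  have hgy := norm_glCLM_pos g y.rep_nonzero
  rw [pdelta_pact]
  calc wedgeNorm (glCLM g x.rep) (glCLM g y.rep) / (‖glCLM g x.rep‖ * ‖glCLM g y.rep‖)
      ≤ N2 g * wedgeNorm x.rep y.rep / (‖glCLM g x.rep‖ * ‖glCLM g y.rep‖) := by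
        gcongr
        exact wedgeNorm_glCLM_le _ _ _
    _ = N2 g * (‖x.rep‖ / ‖glCLM g x.rep‖) * (‖y.rep‖ / ‖glCLM g y.rep‖) *
          (wedgeNorm x.rep y.rep / (‖x.rep‖ * ‖y.rep‖)) := by field_simp

lemma pdelta_pact_le_exp (hd : 2 ≤ d) (g : GLd d) (x y : Pd d) :
    pdelta (pact g x) (pact g y) ≤
      Real.exp (Real.log (N2 g) - logGrowth g x.rep - logGrowth g y.rep) * pdelta x y := by
  rw [Real.exp_sub, Real.exp_sub, Real.exp_log (N2_pos hd g), exp_logGrowth g x.rep_nonzero,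
    exp_logGrowth g y.rep_nonzero, div_div_eq_mul_div, div_div_eq_mul_div, ← mul_div, ← mul_div]
  exact pdelta_pact_le g x y

lemma NormBound.pdelta_pact_le {R : ℝ} {g : GLd d} (hg : NormBound R g) (x y : Pd d) :
    pdelta (pact g x) (pact g y) ≤ R ^ 4 * pdelta x y := by
  have hR := hg.nonneg
  have ratio_le {v : Ed d} (hv : v ≠ 0) : ‖v‖ / ‖glCLM g v‖ ≤ R :=
    (div_le_iff₀ (norm_glCLM_pos g hv)).2 (hg.norm_le v)
  refine (_root_.pdelta_pact_le g x y).trans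
    (mul_le_mul_of_nonneg_right ?_ (pdelta_nonneg x y))
  calc N2 g * (‖x.rep‖ / ‖glCLM g x.rep‖) * (‖y.rep‖ / ‖glCLM g y.rep‖)
      ≤ R ^ 2 * R * R := by
        gcongr
        exacts [hg.N2_le, ratio_le x.rep_nonzero, ratio_le y.rep_nonzero]
    _ = R ^ 4 := by ring

/-! ### Convolution powers -/

lemma mconvN_one (μ : Measure (GLd d)) : mconvN μ 1 = μ := by simp [mconvN]

lemma mconvN_succ (μ : Measure (GLd d)) [SFinite μ] (n : ℕ) :
    mconvN μ (n + 1) = mconv (mconvN μ n) μ := by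
  rcases eq_or_ne n 0 with rfl | hn
  · rw [mconvN_one]
    exact (Measure.dirac_one_mconv μ).symm
  · simp [mconvN, hn]

instance (μ ν : Measure (GLd d)) [SFinite μ] [SFinite ν] : SFinite (mconv μ ν) :=
  Measure.sfinite_mconv_of_sfinite μ ν

instance (μ : Measure (GLd d)) [SFinite μ] (n : ℕ) : SFinite (mconvN μ n) := by
  induction n with
  | zero => exact inferInstanceAs (SFinite (Measure.dirac 1))
  | succ n ih => rw [mconvN_succ]; infer_instance

instance (μ ν : Measure (GLd d)) [IsFiniteMeasure μ] [IsFiniteMeasure ν] :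
    IsFiniteMeasure (mconv μ ν) :=
  Measure.finite_of_finite_mconv μ ν

instance (μ ν : Measure (GLd d)) [IsProbabilityMeasure μ] [IsProbabilityMeasure ν] :
    IsProbabilityMeasure (mconv μ ν) :=
  Measure.probabilitymeasure_of_probabilitymeasures_mconv μ ν

instance (μ : Measure (GLd d)) [IsProbabilityMeasure μ] (n : ℕ) :
    IsProbabilityMeasure (mconvN μ n) := by
  induction n with
  | zero => exact inferInstanceAs (IsProbabilityMeasure (Measure.dirac 1))
  | succ n ih => rw [mconvN_succ]; infer_instance

lemma mconvN_add (μ : Measure (GLd d)) [SFinite μ] (m n : ℕ) :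
    mconvN μ (m + n) = mconv (mconvN μ m) (mconvN μ n) := by
  induction n with
  | zero => exact (Measure.mconv_dirac_one _).symm
  | succ n ih =>
    rw [← add_assoc, mconvN_succ, ih, mconvN_succ]
    exact Measure.mconv_assoc _ _ _

lemma ae_mconv {μ ν : Measure (GLd d)} [SFinite μ] [SFinite ν] {p q r : GLd d → Prop}
    (hr : MeasurableSet {g | r g}) (hp : ∀ᵐ g ∂μ, p g) (hq : ∀ᵐ h ∂ν, q h)
    (hpqr : ∀ g h, p g → q h → r (g * h)) : ∀ᵐ g ∂(mconv μ ν), r g := by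
  rw [mconv, ae_map_iff (by fun_prop) hr]
  filter_upwards [Measure.quasiMeasurePreserving_fst.ae hp,
    Measure.quasiMeasurePreserving_snd.ae hq] with z hz₁ hz₂
  exact hpqr _ _ hz₁ hz₂

lemma lintegral_mconv_symm (μ ν : Measure (GLd d)) [SFinite μ] [SFinite ν] {F : GLd d → ℝ≥0∞}
    (hF : Measurable F) : ∫⁻ g, F g ∂(mconv μ ν) = ∫⁻ h, ∫⁻ g, F (g * h) ∂μ ∂ν := by
  rw [mconv, lintegral_map hF (by fun_prop)]
  exact lintegral_prod_symm' _ (hF.comp (by fun_prop))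

lemma integrable_prod_of_integrable_mconv {μ ν : Measure (GLd d)} [SFinite μ] [SFinite ν]
    {F : GLd d → ℝ} (hF : Integrable F (mconv μ ν)) :
    Integrable (fun z : GLd d × GLd d => F (z.1 * z.2)) (μ.prod ν) :=
  hF.comp_measurable (by fun_prop)

lemma integral_mconv_symm {μ ν : Measure (GLd d)} [SFinite μ] [SFinite ν] {F : GLd d → ℝ}
    (hF : Integrable F (mconv μ ν)) : ∫ g, F g ∂(mconv μ ν) = ∫ h, ∫ g, F (g * h) ∂μ ∂ν := by
  rw [mconv, integral_map (by fun_prop) hF.1]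
  exact integral_prod_symm _ (integrable_prod_of_integrable_mconv hF)

lemma ae_normBound_mconvN {μ : Measure (GLd d)} [SFinite μ] {M : ℝ}
    (hμ : ∀ᵐ g ∂μ, NormBound M g) (n : ℕ) : ∀ᵐ g ∂(mconvN μ n), NormBound (M ^ n) g := by
  induction n with
  | zero =>
    have one : gnorm (1 : GLd d) ≤ 1 := by
      rw [gnorm, glCLM_one]
      exact ContinuousLinearMap.norm_id_le
    rw [mconvN, ae_dirac_iff (measurableSet_normBound _), pow_zero]
    exact ⟨one, inv_one (G := GLd d) ▸ one⟩
  | succ n ih =>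
    rw [mconvN_succ, pow_succ]
    exact ae_mconv (measurableSet_normBound _) ih hμ fun g h hg hh => hg.mul hh

lemma integral_mconv_le_add {μ ν : Measure (GLd d)} [IsProbabilityMeasure μ]
    [IsProbabilityMeasure ν] {f : GLd d → ℝ} (hμ : Integrable f μ) (hν : Integrable f ν)
    (hμν : Integrable f (mconv μ ν)) (hsub : ∀ᵐ h ∂ν, ∀ g, f (g * h) ≤ f g + f h) :
    ∫ g, f g ∂(mconv μ ν) ≤ ∫ g, f g ∂μ + ∫ h, f h ∂ν := by
  have hprod := integrable_prod_of_integrable_mconv hμν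
  have inner : ∀ᵐ h ∂ν, ∫ g, f (g * h) ∂μ ≤ ∫ g, f g ∂μ + f h := by
    filter_upwards [hsub, hprod.prod_left_ae] with h hh hint
    calc ∫ g, f (g * h) ∂μ ≤ ∫ g, (f g + f h) ∂μ :=
          integral_mono hint (hμ.add (integrable_const _)) hh
      _ = ∫ g, f g ∂μ + f h := by
          rw [integral_add hμ (integrable_const _), integral_const, probReal_univ, one_smul]
  calc ∫ g, f g ∂(mconv μ ν) = ∫ h, ∫ g, f (g * h) ∂μ ∂ν := integral_mconv_symm hμν
    _ ≤ ∫ h, (∫ g, f g ∂μ + f h) ∂ν :=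
        integral_mono_ae hprod.integral_prod_right ((integrable_const _).add hν) inner
    _ = ∫ g, f g ∂μ + ∫ h, f h ∂ν := by
        rw [integral_add (integrable_const _) hν, integral_const, probReal_univ, one_smul]

lemma tendsto_integral_mconvN_of_subadditive (μ : Measure (GLd d)) [IsProbabilityMeasure μ]
    {f : GLd d → ℝ} (hf : Measurable f) {B : ℝ}
    (hB : ∀ n : ℕ, ∀ᵐ g ∂(mconvN μ n), |f g| ≤ n * B)
    (hsub : ∀ n : ℕ, ∀ᵐ h ∂(mconvN μ n), ∀ g, f (g * h) ≤ f g + f h) :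
    ∃ l, Tendsto (fun n : ℕ => (n : ℝ)⁻¹ * ∫ g, f g ∂(mconvN μ n)) atTop (𝓝 l) := by
  have integrable (n : ℕ) : Integrable f (mconvN μ n) :=
    Integrable.of_bound hf.aestronglyMeasurable _ (hB n)
  have subadditive : Subadditive fun n : ℕ => ∫ g, f g ∂(mconvN μ n) := fun m n =>
    (congrArg (fun ν => ∫ g, f g ∂ν) (mconvN_add μ m n)).trans_le
      (integral_mconv_le_add (integrable m) (integrable n) (mconvN_add μ m n ▸ integrable _)
        (hsub n))
  have bddBelow : BddBelow (Set.range fun n : ℕ => (∫ g, f g ∂(mconvN μ n)) / n) := by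
    refine ⟨-|B|, ?_⟩
    rintro _ ⟨n, rfl⟩
    have hn : |∫ g, f g ∂(mconvN μ n)| ≤ n * B := by
      simpa using norm_integral_le_of_norm_le_const (f := f) (hB n)
    rcases n.eq_zero_or_pos with rfl | hpos
    · simp
    · rw [le_div_iff₀ (Nat.cast_pos.2 hpos)]
      nlinarith [(abs_le.1 hn).1, le_abs_self B, n.cast_nonneg (α := ℝ)]
  exact ⟨subadditive.lim, by simpa [div_eq_inv_mul] using subadditive.tendsto_lim bddBelow⟩

/-! ### Exponential moments -/

section ExpMoment

variable {Ω : Type*} [MeasurableSpace Ω]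

lemma lintegral_exp_mul_le {ν : Measure Ω} [IsProbabilityMeasure ν] {X : Ω → ℝ}
    (hX : AEMeasurable X ν) {B c s : ℝ} (hB : ∀ᵐ ω ∂ν, |X ω| ≤ B) (hc : ∫ ω, X ω ∂ν ≤ -c)
    (hs : 0 ≤ s) (hsB : s * B ≤ 1) :
    ∫⁻ ω, ENNReal.ofReal (Real.exp (s * X ω)) ∂ν ≤
      ENNReal.ofReal (1 - s * c + s ^ 2 * B ^ 2) := by
  have hXint : Integrable X ν := Integrable.of_bound hX.aestronglyMeasurable B hB
  have linear : Integrable (fun ω => 1 + s * X ω) ν :=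
    (integrable_const _).add (hXint.const_mul s)
  have majorant : Integrable (fun ω => 1 + s * X ω + s ^ 2 * B ^ 2) ν :=
    linear.add (integrable_const _)
  have exp_le : ∀ᵐ ω ∂ν, Real.exp (s * X ω) ≤ 1 + s * X ω + s ^ 2 * B ^ 2 := by
    filter_upwards [hB] with ω hω
    have small : |s * X ω| ≤ 1 := by
      rw [abs_mul, abs_of_nonneg hs]
      exact (mul_le_mul_of_nonneg_left hω hs).trans hsB
    have taylor := (abs_le.1 (Real.abs_exp_sub_one_sub_id_le small)).2
    have square : (s * X ω) ^ 2 ≤ s ^ 2 * B ^ 2 := by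
      rw [mul_pow]
      exact mul_le_mul_of_nonneg_left (sq_le_sq' (abs_le.1 hω).1 (abs_le.1 hω).2) (sq_nonneg _)
    linarith
  have hexp : Integrable (fun ω => Real.exp (s * X ω)) ν :=
    majorant.mono' (hX.const_mul s).exp.aestronglyMeasurable (by
      simpa only [Real.norm_eq_abs, Real.abs_exp] using exp_le)
  rw [← ofReal_integral_eq_lintegral_ofReal hexp (ae_of_all _ fun ω => (Real.exp_pos _).le)]
  refine ENNReal.ofReal_le_ofReal ((integral_mono_ae hexp majorant exp_le).trans ?_)
  rw [integral_add linear (integrable_const _),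
    integral_add (integrable_const _) (hXint.const_mul s), integral_const_mul]
  simp only [integral_const, probReal_univ, smul_eq_mul, one_mul]
  nlinarith

lemma exists_lintegral_exp_mul_le {B c : ℝ} (hB : 0 ≤ B) (hc : 0 < c) :
    ∃ s κ : ℝ, 0 < s ∧ s ≤ 1 ∧ 0 < κ ∧ κ < 1 ∧
      ∀ (ν : Measure Ω) [IsProbabilityMeasure ν] (X : Ω → ℝ), AEMeasurable X ν →
        (∀ᵐ ω ∂ν, |X ω| ≤ B) → ∫ ω, X ω ∂ν ≤ -c →
        ∫⁻ ω, ENNReal.ofReal (Real.exp (s * X ω)) ∂ν ≤ ENNReal.ofReal κ := by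
  set D := B + c + 1
  have hD1 : 1 ≤ D := by linarith
  set s := c / (2 * D ^ 2) with hs
  have hDD : D ≤ D ^ 2 := by nlinarith
  have hs0 : 0 < s := by positivity
  have hsD : s * D ^ 2 = c / 2 := by rw [hs]; field_simp
  have hsD' : s * D ≤ 1 / 2 := by
    rw [hs, div_mul_eq_mul_div, div_le_div_iff₀ (by positivity) two_pos]
    nlinarith
  refine ⟨s, 1 - s * c / 2, hs0, by nlinarith, by nlinarith, by nlinarith [mul_pos hs0 hc],
    fun ν _ X hX hXB hXc => ?_⟩
  refine (lintegral_exp_mul_le hX (hXB.mono fun ω hω => hω.trans (by linarith : B ≤ D)) hXc hs0.le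
    (by linarith)).trans (ENNReal.ofReal_le_ofReal ?_)
  nlinarith

end ExpMoment

/-! ### Minimal growth -/

/-- The expected logarithmic growth of `v` under `n` independent factors of law `μ`. -/
def meanGrowth (μ : Measure (GLd d)) (n : ℕ) (v : Ed d) : ℝ := ∫ g, logGrowth g v ∂(mconvN μ n)

lemma meanGrowth_smul {μ : Measure (GLd d)} {c : ℝ} (hc : c ≠ 0) (n : ℕ) (v : Ed d) :
    meanGrowth μ n (c • v) = meanGrowth μ n v := by
  simp only [meanGrowth, logGrowth_smul _ hc]

/-- The least expected logarithmic growth of a nonzero vector after `n` steps. -/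
def minGrowth (μ : Measure (GLd d)) (n : ℕ) : ℝ := ⨅ v : {v : Ed d // v ≠ 0}, meanGrowth μ n v

instance [NeZero d] : Nonempty {v : Ed d // v ≠ 0} := nonempty_subtype.2 (exists_ne 0)

lemma le_minGrowth [NeZero d] {μ : Measure (GLd d)} {n : ℕ} {a : ℝ}
    (ha : ∀ v : Ed d, v ≠ 0 → a ≤ meanGrowth μ n v) :
    a ≤ minGrowth μ n :=
  le_ciInf fun v => ha v v.2

lemma exists_uniform_rate {X : Type*} [TopologicalSpace X] [CompactSpace X] {f : ℕ → X → ℝ}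
    (hf : ∀ n, Continuous (f n)) {β : ℝ} (h : ∀ x, ∃ n : ℕ, 1 ≤ n ∧ n * β < f n x) :
    ∃ (N : ℕ) (ε : ℝ), 0 < ε ∧ ∀ x, ∃ n : ℕ, 1 ≤ n ∧ n ≤ N ∧ n * (β + ε) ≤ f n x := by
  let U : ℕ → Set X := fun k =>
    ⋃ n ∈ Set.Icc 1 k, {x | n * (β + 1 / ((k : ℝ) + 1)) < f n x}
  have U_open (k : ℕ) : IsOpen (U k) :=
    isOpen_biUnion fun n _ => isOpen_lt continuous_const (hf n)
  have U_mono : Monotone U := by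
    intro k l hkl x hx
    simp only [U, Set.mem_iUnion, Set.mem_Icc, Set.mem_ofPred_eq] at hx ⊢
    obtain ⟨n, hn, hlt⟩ := hx
    refine ⟨n, ⟨hn.1, hn.2.trans hkl⟩, lt_of_le_of_lt ?_ hlt⟩
    gcongr
  have U_cover : Set.univ ⊆ ⋃ k, U k := by
    intro x _
    obtain ⟨n, hn, hlt⟩ := h x
    obtain ⟨k, hk⟩ := exists_nat_gt (n / (f n x - n * β))
    simp only [U, Set.mem_iUnion, Set.mem_Icc, Set.mem_ofPred_eq]
    refine ⟨max n k, n, ⟨hn, le_max_left _ _⟩, ?_⟩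
    have hkmax : (k : ℝ) < (max n k : ℕ) + 1 :=
      (Nat.cast_le.2 (le_max_right n k)).trans_lt (lt_add_one _)
    rw [div_lt_iff₀ (sub_pos.2 hlt)] at hk
    have : n * (1 / (((max n k : ℕ) : ℝ) + 1)) < f n x - n * β := by
      rw [mul_one_div, div_lt_iff₀ (by positivity), mul_comm]
      exact hk.trans (mul_lt_mul_of_pos_right hkmax (sub_pos.2 hlt))
    linarith
  obtain ⟨k, hk⟩ := isCompact_univ.elim_directed_cover U U_open U_cover U_mono.directed_le
  refine ⟨k, 1 / ((k : ℝ) + 1), by positivity, fun x => ?_⟩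
  have hx := hk (Set.mem_univ x)
  simp only [U, Set.mem_iUnion, Set.mem_Icc, Set.mem_ofPred_eq] at hx
  obtain ⟨n, ⟨hn, hnk⟩, hlt⟩ := hx
  exact ⟨n, hn, hnk, hlt.le⟩

section MinimalGrowth

variable {μ : Measure (GLd d)} [IsProbabilityMeasure μ] {M : ℝ}

lemma ae_abs_logGrowth_le (hμ : ∀ᵐ g ∂μ, NormBound M g) (n : ℕ) {v : Ed d} (hv : v ≠ 0) :
    ∀ᵐ g ∂(mconvN μ n), |logGrowth g v| ≤ n * Real.log M := by
  filter_upwards [ae_normBound_mconvN hμ n] with g hg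
  simpa only [Real.log_pow] using hg.abs_logGrowth_le hv

lemma integrable_logGrowth (hμ : ∀ᵐ g ∂μ, NormBound M g) (n : ℕ) {v : Ed d} (hv : v ≠ 0) :
    Integrable (fun g => logGrowth g v) (mconvN μ n) :=
  Integrable.of_bound (measurable_logGrowth_left v).aestronglyMeasurable _
    (ae_abs_logGrowth_le hμ n hv)

lemma abs_meanGrowth_le (hμ : ∀ᵐ g ∂μ, NormBound M g) (n : ℕ) {v : Ed d} (hv : v ≠ 0) :
    |meanGrowth μ n v| ≤ n * Real.log M := by
  simpa [meanGrowth] using norm_integral_le_of_norm_le_const (f := (logGrowth · v))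
    (ae_abs_logGrowth_le hμ n hv)

lemma add_meanGrowth_le (hμ : ∀ᵐ g ∂μ, NormBound M g) {m n : ℕ} {a : ℝ}
    (ha : ∀ w : Ed d, w ≠ 0 → a ≤ meanGrowth μ m w) {v : Ed d} (hv : v ≠ 0) :
    a + meanGrowth μ n v ≤ meanGrowth μ (m + n) v := by
  have hmn : Integrable (logGrowth · v) (mconv (mconvN μ m) (mconvN μ n)) :=
    mconvN_add μ m n ▸ integrable_logGrowth hμ (m + n) hv
  have hn := integrable_logGrowth hμ n hv
  have inner (h : GLd d) : ∫ g, logGrowth (g * h) v ∂(mconvN μ m) =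
      meanGrowth μ m (glCLM h v) + logGrowth h v := by
    simp only [logGrowth_mul]
    rw [integral_add (integrable_logGrowth hμ m (glCLM_ne_zero h hv)) (integrable_const _),
      integral_const, probReal_univ, one_smul, meanGrowth]
  calc a + meanGrowth μ n v = ∫ h, (a + logGrowth h v) ∂(mconvN μ n) := by
        rw [integral_add (integrable_const _) hn, integral_const, probReal_univ, one_smul,
          meanGrowth]
    _ ≤ ∫ h, ∫ g, logGrowth (g * h) v ∂(mconvN μ m) ∂(mconvN μ n) := by
        refine integral_mono ((integrable_const _).add hn)
          (integrable_prod_of_integrable_mconv hmn).integral_prod_right fun h => ?_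
        rw [inner]
        exact add_le_add_left (ha _ (glCLM_ne_zero h hv)) _
    _ = meanGrowth μ (m + n) v := by
        rw [meanGrowth, mconvN_add, integral_mconv_symm hmn]

lemma continuous_meanGrowth_sphere (hμ : ∀ᵐ g ∂μ, NormBound M g) (n : ℕ) :
    Continuous fun v : Metric.sphere (0 : Ed d) 1 => meanGrowth μ n v := by
  refine continuous_of_dominated
    (fun v => (measurable_logGrowth_left (v : Ed d)).aestronglyMeasurable)
    (fun v => ae_abs_logGrowth_le hμ n (ne_zero_of_mem_unit_sphere v))
    (integrable_const _) (ae_of_all _ fun g => ?_)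
  have hv (v : Metric.sphere (0 : Ed d) 1) : (v : Ed d) ≠ 0 := ne_zero_of_mem_unit_sphere v
  exact (((glCLM g).continuous.comp continuous_subtype_val).norm.log fun v =>
    (norm_glCLM_pos g (hv v)).ne').sub
      (continuous_subtype_val.norm.log fun v => norm_ne_zero_iff.2 (hv v))

lemma minGrowth_le (hμ : ∀ᵐ g ∂μ, NormBound M g) (n : ℕ) {v : Ed d} (hv : v ≠ 0) :
    minGrowth μ n ≤ meanGrowth μ n v := by
  refine ciInf_le ⟨-(n * Real.log M), ?_⟩ (⟨v, hv⟩ : {v : Ed d // v ≠ 0})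
  rintro _ ⟨w, rfl⟩
  exact (abs_le.1 (abs_meanGrowth_le hμ n w.2)).1

variable [NeZero d]

lemma exists_tendsto_minGrowth_div (hμ : ∀ᵐ g ∂μ, NormBound M g) :
    ∃ β : ℝ, Tendsto (fun n : ℕ => minGrowth μ n / n) atTop (𝓝 β) := by
  obtain ⟨v, hv⟩ := exists_ne (0 : Ed d)
  have subadditive : Subadditive fun n => -minGrowth μ n := by
    intro m n
    have superadditive : minGrowth μ m + minGrowth μ n ≤ minGrowth μ (m + n) :=
      le_minGrowth fun v hv => (add_le_add_right (minGrowth_le hμ n hv) _).trans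
        (add_meanGrowth_le hμ (fun w hw => minGrowth_le hμ m hw) hv)
    dsimp only
    linarith
  have bddBelow : BddBelow (Set.range fun n : ℕ => -minGrowth μ n / n) := by
    refine ⟨-|Real.log M|, ?_⟩
    rintro _ ⟨n, rfl⟩
    rcases n.eq_zero_or_pos with rfl | hn
    · simp
    · rw [le_div_iff₀ (Nat.cast_pos.2 hn)]
      nlinarith [minGrowth_le hμ n hv, (abs_le.1 (abs_meanGrowth_le hμ n hv)).2,
        le_abs_self (Real.log M), n.cast_nonneg (α := ℝ)]
  exact ⟨-subadditive.lim, by simpa [neg_div] using (subadditive.tendsto_lim bddBelow).neg⟩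

lemma mul_sub_le_meanGrowth_of_forall_exists (hμ : ∀ᵐ g ∂μ, NormBound M g) {N : ℕ} {γ : ℝ}
    (h : ∀ v : Ed d, v ≠ 0 → ∃ n : ℕ, 1 ≤ n ∧ n ≤ N ∧ n * γ ≤ meanGrowth μ n v) (n : ℕ)
    {v : Ed d} (hv : v ≠ 0) : n * γ - N * (|γ| + Real.log M) ≤ meanGrowth μ n v := by
  have hM : 0 ≤ Real.log M := hμ.exists.elim fun g hg => Real.log_nonneg hg.one_le
  induction n using Nat.strong_induction_on generalizing v with
  | _ n ih =>
    rcases le_or_gt n N with hnN | hNn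
    · have hn : (n : ℝ) ≤ N := Nat.cast_le.2 hnN
      nlinarith [(abs_le.1 (abs_meanGrowth_le hμ n hv)).1, le_abs_self γ, abs_nonneg γ,
        n.cast_nonneg (α := ℝ)]
    · obtain ⟨k, hk, hkN, hkγ⟩ := h v hv
      have hstep := add_meanGrowth_le (n := k) hμ (fun w hw => ih (n - k) (by omega) hw) hv
      rw [Nat.sub_add_cancel (by omega), Nat.cast_sub (by omega)] at hstep
      linarith

/-- Otherwise compactness of the sphere yields a uniform gain along bounded stopping times, and
iterating it pushes every growth rate above `β`. -/
lemma exists_forall_meanGrowth_le (hμ : ∀ᵐ g ∂μ, NormBound M g) {β : ℝ}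
    (hβ : Tendsto (fun n : ℕ => minGrowth μ n / n) atTop (𝓝 β)) :
    ∃ v : Ed d, ‖v‖ = 1 ∧ ∀ n : ℕ, 1 ≤ n → meanGrowth μ n v ≤ n * β := by
  by_contra! hcon
  obtain ⟨N, ε, hε, gain⟩ := exists_uniform_rate (continuous_meanGrowth_sphere hμ)
    fun v => hcon v (norm_eq_of_mem_sphere v)
  have gain' (v : Ed d) (hv : v ≠ 0) :
      ∃ n : ℕ, 1 ≤ n ∧ n ≤ N ∧ n * (β + ε) ≤ meanGrowth μ n v := by
    simpa only [meanGrowth_smul (inv_ne_zero (norm_ne_zero_iff.2 hv))] using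
      gain ⟨‖v‖⁻¹ • v, mem_sphere_zero_iff_norm.2 (norm_smul_inv_norm hv)⟩
  set C := N * (|β + ε| + Real.log M)
  have lower : Tendsto (fun n : ℕ => β + ε - C / n) atTop (𝓝 (β + ε)) := by
    simpa using tendsto_const_nhds.sub (tendsto_const_div_atTop_nhds_zero_nat C)
  refine (lt_add_of_pos_right β hε).not_ge (le_of_tendsto_of_tendsto lower hβ ?_)
  filter_upwards [eventually_gt_atTop 0] with n hn
  have hn' : (0 : ℝ) < n := Nat.cast_pos.2 hn
  rw [le_div_iff₀ hn', sub_mul, div_mul_cancel₀ _ hn'.ne', mul_comm]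
  exact le_minGrowth fun v hv => mul_sub_le_meanGrowth_of_forall_exists hμ gain' n hv

end MinimalGrowth

/-! ### Lower deviations of the growth -/

lemma lintegral_exp_sub_logGrowth_le_of_le {μ : Measure (GLd d)} [IsProbabilityMeasure μ] {M : ℝ}
    (hμ : ∀ᵐ g ∂μ, NormBound M g) {s : ℝ} (hs : 0 ≤ s) (γ : ℝ) {m n : ℕ} (hnm : n ≤ m)
    {v : Ed d} (hv : v ≠ 0) :
    ∫⁻ g, ENNReal.ofReal (Real.exp (s * (n * γ - logGrowth g v))) ∂(mconvN μ n) ≤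
      ENNReal.ofReal (Real.exp (s * (m * (|γ| + |Real.log M|)))) := by
  refine lintegral_le_const ?_
  filter_upwards [ae_abs_logGrowth_le hμ n hv] with g hg
  refine ENNReal.ofReal_le_ofReal (Real.exp_le_exp.2 (mul_le_mul_of_nonneg_left ?_ hs))
  calc n * γ - logGrowth g v ≤ n * |γ| + n * |Real.log M| := by
        rw [sub_eq_add_neg]
        gcongr
        · exact le_abs_self γ
        · exact (neg_le_abs _).trans (hg.trans (by gcongr; exact le_abs_self _))
    _ ≤ m * (|γ| + |Real.log M|) := by
        rw [← mul_add]
        gcongr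

lemma lintegral_exp_sub_logGrowth_le {μ : Measure (GLd d)} [IsProbabilityMeasure μ] {M : ℝ}
    (hμ : ∀ᵐ g ∂μ, NormBound M g) {s γ : ℝ} (hs : 0 ≤ s) {m : ℕ} (hm : 0 < m)
    (hblock : ∀ v : Ed d, v ≠ 0 →
      ∫⁻ g, ENNReal.ofReal (Real.exp (s * (m * γ - logGrowth g v))) ∂(mconvN μ m) ≤ 1)
    (n : ℕ) {v : Ed d} (hv : v ≠ 0) :
    ∫⁻ g, ENNReal.ofReal (Real.exp (s * (n * γ - logGrowth g v))) ∂(mconvN μ n) ≤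
      ENNReal.ofReal (Real.exp (s * (m * (|γ| + |Real.log M|)))) := by
  induction n using Nat.strong_induction_on generalizing v with
  | _ n ih =>
    rcases lt_or_ge n m with hnm | hmn
    · exact lintegral_exp_sub_logGrowth_le_of_le hμ hs γ hnm.le hv
    · obtain ⟨k, rfl⟩ := Nat.exists_eq_add_of_le' hmn
      have split (g h : GLd d) :
          ENNReal.ofReal (Real.exp (s * ((k + m : ℕ) * γ - logGrowth (g * h) v))) =
            ENNReal.ofReal (Real.exp (s * (k * γ - logGrowth g (glCLM h v)))) *
              ENNReal.ofReal (Real.exp (s * (m * γ - logGrowth h v))) := by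
        rw [← ENNReal.ofReal_mul (Real.exp_pos _).le, ← Real.exp_add, logGrowth_mul]
        push_cast
        ring_nf
      have measurable (w : Ed d) (j : ℕ) : Measurable fun g : GLd d =>
          ENNReal.ofReal (Real.exp (s * (j * γ - logGrowth g w))) :=
        (((measurable_logGrowth_left w).const_sub _).const_mul s).exp.ennreal_ofReal
      rw [mconvN_add, lintegral_mconv_symm _ _ (measurable v _)]
      simp only [split]
      calc _ ≤ ∫⁻ h, ENNReal.ofReal (Real.exp (s * (m * (|γ| + |Real.log M|)))) *
                ENNReal.ofReal (Real.exp (s * (m * γ - logGrowth h v))) ∂(mconvN μ m) :=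
            lintegral_mono fun h => by
              rw [lintegral_mul_const _ (measurable _ k)]
              gcongr
              exact ih k (by omega) (glCLM_ne_zero h hv)
        _ ≤ _ := by
            rw [lintegral_const_mul _ (measurable v m)]
            exact mul_le_of_le_one_right' (hblock v hv)

lemma exists_lintegral_exp_sub_logGrowth_le {μ : Measure (GLd d)} [IsProbabilityMeasure μ]
    {M : ℝ} (hμ : ∀ᵐ g ∂μ, NormBound M g) {β : ℝ}
    (hβ : Tendsto (fun n : ℕ => minGrowth μ n / n) atTop (𝓝 β)) {γ : ℝ} (hγ : γ < β) :
    ∃ s C : ℝ, 0 < s ∧ 0 < C ∧ ∀ (n : ℕ) (v : Ed d), v ≠ 0 →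
      ∫⁻ g, ENNReal.ofReal (Real.exp (s * (n * γ - logGrowth g v))) ∂(mconvN μ n) ≤
        ENNReal.ofReal C := by
  obtain ⟨m, hmγ, hm⟩ := ((hβ.eventually_const_lt hγ).and (eventually_gt_atTop 0)).exists
  have gain : 0 < minGrowth μ m - m * γ := by
    rwa [sub_pos, mul_comm, ← lt_div_iff₀ (Nat.cast_pos.2 hm)]
  obtain ⟨s, κ, hs, -, -, hκ, moment⟩ := exists_lintegral_exp_mul_le (Ω := GLd d)
    (B := m * (|γ| + |Real.log M|)) (by positivity) gain
  refine ⟨s, _, hs, Real.exp_pos _, fun n v =>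
    lintegral_exp_sub_logGrowth_le hμ hs.le hm (fun v hv => ?_) n⟩
  have integrable := integrable_logGrowth hμ m hv
  refine (moment (mconvN μ m) (fun g => m * γ - logGrowth g v)
    ((measurable_logGrowth_left v).const_sub _).aemeasurable ?_ ?_).trans
    (ENNReal.ofReal_le_one.2 hκ.le)
  · filter_upwards [ae_abs_logGrowth_le hμ m hv] with g hg
    calc |m * γ - logGrowth g v| ≤ |m * γ| + |logGrowth g v| := abs_sub _ _
      _ ≤ m * |γ| + m * |Real.log M| := by
          rw [abs_mul, Nat.abs_cast]
          gcongr
          exact hg.trans (by gcongr; exact le_abs_self _)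
      _ = m * (|γ| + |Real.log M|) := by ring
  · rw [integral_sub (integrable_const _) integrable, integral_const, probReal_univ, one_smul,
      neg_sub]
    exact sub_le_sub_left (minGrowth_le hμ m hv) _

lemma log_one_add_exp_le {s δ : ℝ} (hs : 0 < s) (hδ : 0 ≤ δ) (x : ℝ) :
    Real.log (1 + Real.exp x) ≤ Real.log 2 + x + δ + s⁻¹ * Real.exp (s * (-δ - x)) := by
  have tail : -δ - x ≤ s⁻¹ * Real.exp (s * (-δ - x)) := by
    rw [le_inv_mul_iff₀ hs]
    linarith [Real.add_one_le_exp (s * (-δ - x))]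
  have tail_nonneg : 0 ≤ s⁻¹ * Real.exp (s * (-δ - x)) := by positivity
  rcases le_total x 0 with hx | hx
  · have : Real.log (1 + Real.exp x) ≤ Real.log 2 :=
      Real.log_le_log (by positivity) (by linarith [Real.exp_le_one_iff.2 hx])
    linarith
  · have : Real.log (1 + Real.exp x) ≤ Real.log (2 * Real.exp x) :=
      Real.log_le_log (by positivity) (by linarith [Real.one_le_exp hx])
    rw [Real.log_mul two_ne_zero (Real.exp_pos x).ne', Real.log_exp] at this
    linarith

/-! ### Excess growth and slow subspaces -/

/-- The mean excess of `log ‖g w‖` over `n * β` after `n` steps, divided by `n`. The logarithm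
is truncated to `x ↦ log (1 + exp x)`, which makes the vectors of vanishing excess a subspace. -/
def excessGrowth (μ : Measure (GLd d)) (β : ℝ) (n : ℕ) (w : Ed d) : ℝ :=
  (n : ℝ)⁻¹ * ∫ g, Real.log (1 + Real.exp (-(n * β)) * ‖glCLM g w‖) ∂(mconvN μ n)

lemma log_one_add_mul_norm_nonneg {c : ℝ} (hc : 0 ≤ c) (w : Ed d) :
    0 ≤ Real.log (1 + c * ‖w‖) :=
  Real.log_nonneg (le_add_of_nonneg_right (by positivity))

lemma excessGrowth_nonneg (μ : Measure (GLd d)) (β : ℝ) (n : ℕ) (w : Ed d) :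
    0 ≤ excessGrowth μ β n w :=
  mul_nonneg (by positivity)
    (integral_nonneg fun g => log_one_add_mul_norm_nonneg (Real.exp_pos _).le _)

lemma excessGrowth_zero (μ : Measure (GLd d)) (β : ℝ) (n : ℕ) : excessGrowth μ β n 0 = 0 := by
  simp [excessGrowth]

section ExcessGrowth

variable {μ : Measure (GLd d)} [IsProbabilityMeasure μ] {M : ℝ}

lemma integrable_log_one_add_mul_norm (hμ : ∀ᵐ g ∂μ, NormBound M g) (n : ℕ) {c : ℝ} (hc : 0 ≤ c)
    (w : Ed d) : Integrable (fun g => Real.log (1 + c * ‖glCLM g w‖)) (mconvN μ n) := by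
  refine Integrable.of_bound ((((continuous_glCLM_apply w).norm.const_mul c).const_add
    1).measurable.log).aestronglyMeasurable (Real.log (1 + c * (M ^ n * ‖w‖))) ?_
  filter_upwards [ae_normBound_mconvN hμ n] with g hg
  rw [Real.norm_of_nonneg (log_one_add_mul_norm_nonneg hc _)]
  gcongr
  exact hg.norm_glCLM_le w

lemma excessGrowth_add_le (hμ : ∀ᵐ g ∂μ, NormBound M g) (β : ℝ) (n : ℕ) (w₁ w₂ : Ed d) :
    excessGrowth μ β n (w₁ + w₂) ≤ excessGrowth μ β n w₁ + excessGrowth μ β n w₂ := by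
  have integrable := integrable_log_one_add_mul_norm hμ n (Real.exp_pos (-(n * β))).le
  rw [excessGrowth, excessGrowth, excessGrowth, ← mul_add,
    ← integral_add (integrable w₁) (integrable w₂)]
  refine mul_le_mul_of_nonneg_left (integral_mono (integrable _)
    ((integrable w₁).add (integrable w₂)) fun g => ?_) (by positivity)
  set c := Real.exp (-(n * β))
  dsimp only
  rw [← Real.log_mul (by positivity) (by positivity), map_add]
  refine Real.log_le_log (by positivity) ?_
  calc 1 + c * ‖glCLM g w₁ + glCLM g w₂‖ ≤ 1 + c * (‖glCLM g w₁‖ + ‖glCLM g w₂‖) := by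
        gcongr
        exact norm_add_le _ _
    _ ≤ (1 + c * ‖glCLM g w₁‖) * (1 + c * ‖glCLM g w₂‖) := by
        have : 0 ≤ c * ‖glCLM g w₁‖ * (c * ‖glCLM g w₂‖) := by positivity
        linarith

lemma excessGrowth_smul_le (hμ : ∀ᵐ g ∂μ, NormBound M g) (β : ℝ) (n : ℕ) (a : ℝ) (w : Ed d) :
    excessGrowth μ β n (a • w) ≤ excessGrowth μ β n w + Real.log (1 + |a|) / n := by
  have integrable := integrable_log_one_add_mul_norm hμ n (Real.exp_pos (-(n * β))).le
  rw [div_eq_inv_mul, excessGrowth, excessGrowth, ← mul_add]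
  refine mul_le_mul_of_nonneg_left ?_ (by positivity)
  set c := Real.exp (-(n * β))
  calc ∫ g, Real.log (1 + c * ‖glCLM g (a • w)‖) ∂(mconvN μ n)
      ≤ ∫ g, (Real.log (1 + c * ‖glCLM g w‖) + Real.log (1 + |a|)) ∂(mconvN μ n) := by
        refine integral_mono (integrable _) ((integrable w).add (integrable_const _)) fun g => ?_
        dsimp only
        rw [← Real.log_mul (by positivity) (by positivity), map_smul, norm_smul, Real.norm_eq_abs]
        refine Real.log_le_log (by positivity) ?_
        have : 0 ≤ c * ‖glCLM g w‖ := by positivity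
        nlinarith [abs_nonneg a]
    _ = _ := by
        rw [integral_add (integrable w) (integrable_const _), integral_const, probReal_univ,
          one_smul]

lemma excessGrowth_glCLM (μ : Measure (GLd d)) (β : ℝ) (n : ℕ) (h : GLd d) (w : Ed d) :
    excessGrowth μ β n (glCLM h w) = (n : ℝ)⁻¹ *
      ∫ g, Real.log (1 + Real.exp (-(n * β)) * ‖glCLM (g * h) w‖) ∂(mconvN μ n) := by
  simp only [excessGrowth, glCLM_mul_apply]

lemma integral_mconvN_succ_le {F : GLd d → ℝ} {n : ℕ} {K : ℝ} (hn : Integrable F (mconvN μ n))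
    (hsucc : Integrable F (mconvN μ (n + 1))) (hK : ∀ᵐ g ∂μ, ∀ h, F (g * h) ≤ F h + K) :
    ∫ g, F g ∂(mconvN μ (n + 1)) ≤ ∫ g, F g ∂(mconvN μ n) + K := by
  have split : mconvN μ (n + 1) = mconv μ (mconvN μ n) := by
    rw [add_comm, mconvN_add, mconvN_one]
  rw [split] at hsucc ⊢
  have hprod := integrable_prod_of_integrable_mconv hsucc
  calc ∫ g, F g ∂(mconv μ (mconvN μ n)) = ∫ h, ∫ g, F (g * h) ∂μ ∂(mconvN μ n) :=
        integral_mconv_symm hsucc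
    _ ≤ ∫ h, (F h + K) ∂(mconvN μ n) := by
        refine integral_mono_ae hprod.integral_prod_right (hn.add (integrable_const K)) ?_
        filter_upwards [hprod.prod_left_ae] with h hint
        calc ∫ g, F (g * h) ∂μ ≤ ∫ _, (F h + K) ∂μ :=
              integral_mono_ae hint (integrable_const _) (hK.mono fun g hg => hg h)
          _ = F h + K := by simp
    _ = ∫ g, F g ∂(mconvN μ n) + K := by
        rw [integral_add hn (integrable_const K), integral_const, probReal_univ, one_smul]

lemma integrable_excessGrowth_glCLM (hμ : ∀ᵐ g ∂μ, NormBound M g) (β : ℝ) (n : ℕ) (w : Ed d) :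
    Integrable (fun h => excessGrowth μ β n (glCLM h w)) μ := by
  simp only [excessGrowth_glCLM]
  exact (integrable_prod_of_integrable_mconv (mconvN_succ μ n ▸
    integrable_log_one_add_mul_norm hμ (n + 1) (Real.exp_pos _).le w)).integral_prod_right.const_mul
      _

/-- The first `n` of `n + 1` factors and the last `n` of them have the same law, and dropping the
leftmost factor changes the logarithm by at most `log (1 + M)`. -/
lemma integral_excessGrowth_glCLM_le (hμ : ∀ᵐ g ∂μ, NormBound M g) (β : ℝ) (n : ℕ) (w : Ed d) :
    ∫ h, excessGrowth μ β n (glCLM h w) ∂μ ≤ excessGrowth μ β n w + Real.log (1 + M) / n := by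
  have integrable (k : ℕ) :=
    integrable_log_one_add_mul_norm hμ k (Real.exp_pos (-(n * β))).le w
  have one_step : ∀ᵐ g ∂μ, ∀ h, Real.log (1 + Real.exp (-(n * β)) * ‖glCLM (g * h) w‖) ≤
      Real.log (1 + Real.exp (-(n * β)) * ‖glCLM h w‖) + Real.log (1 + M) := by
    filter_upwards [hμ] with g hg h
    have hM := hg.nonneg
    have hgh := mul_le_mul_of_nonneg_left (hg.norm_glCLM_le (glCLM h w))
      (Real.exp_pos (-(n * β))).le
    have hh : 0 ≤ Real.exp (-(n * β)) * ‖glCLM h w‖ := by positivity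
    rw [← Real.log_mul (by positivity) (by positivity), glCLM_mul_apply]
    exact Real.log_le_log (by positivity) (by nlinarith)
  simp only [excessGrowth_glCLM]
  have last_step := integral_mconv_symm (mconvN_succ μ n ▸ integrable (n + 1))
  rw [integral_const_mul, ← last_step, ← mconvN_succ, excessGrowth, div_eq_inv_mul, ← mul_add]
  exact mul_le_mul_of_nonneg_left
    (integral_mconvN_succ_le (integrable n) (integrable (n + 1)) one_step) (by positivity)

lemma integrable_and_integral_le_of_lintegral_le {Ω : Type*} [MeasurableSpace Ω] {ν : Measure Ω}
    {f : Ω → ℝ} (hf : AEStronglyMeasurable f ν) (hf0 : ∀ ω, 0 ≤ f ω) {C : ℝ} (hC : 0 ≤ C)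
    (hfC : ∫⁻ ω, ENNReal.ofReal (f ω) ∂ν ≤ ENNReal.ofReal C) :
    Integrable f ν ∧ ∫ ω, f ω ∂ν ≤ C := by
  have integrable : Integrable f ν :=
    ⟨hf, (hasFiniteIntegral_iff_ofReal (ae_of_all _ hf0)).2 (hfC.trans_lt ENNReal.ofReal_lt_top)⟩
  refine ⟨integrable, ?_⟩
  rwa [← ENNReal.ofReal_le_ofReal_iff hC,
    ofReal_integral_eq_lintegral_ofReal integrable (ae_of_all _ hf0)]

lemma excessGrowth_le_of_lintegral_exp_le (hμ : ∀ᵐ g ∂μ, NormBound M g) {β ε s C : ℝ} (hε : 0 ≤ ε)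
    (hs : 0 < s) (hC : 0 ≤ C) {n : ℕ} (hn : 1 ≤ n) {v : Ed d} (hv : ‖v‖ = 1)
    (hβ : meanGrowth μ n v ≤ n * β)
    (hexp : ∫⁻ g, ENNReal.ofReal (Real.exp (s * (n * (β - ε) - logGrowth g v))) ∂(mconvN μ n) ≤
      ENNReal.ofReal C) :
    excessGrowth μ β n v ≤ ε + (Real.log 2 + s⁻¹ * C) / n := by
  have hv0 : v ≠ 0 := norm_ne_zero_iff.1 (hv ▸ one_ne_zero)
  have growth := integrable_logGrowth hμ n hv0
  obtain ⟨exp_integrable, exp_le⟩ := integrable_and_integral_le_of_lintegral_le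
    (((measurable_logGrowth_left v).const_sub _).const_mul s).exp.aestronglyMeasurable
    (fun g => (Real.exp_pos _).le) hC hexp
  have pointwise (g : GLd d) : Real.log (1 + Real.exp (-(n * β)) * ‖glCLM g v‖) ≤
      (Real.log 2 - n * β + n * ε) + logGrowth g v +
        s⁻¹ * Real.exp (s * (n * (β - ε) - logGrowth g v)) := by
    have hx : Real.exp (-(n * β)) * ‖glCLM g v‖ = Real.exp (logGrowth g v - n * β) := by
      rw [sub_eq_neg_add, Real.exp_add, exp_logGrowth g hv0, hv, div_one]
    rw [hx]
    refine (log_one_add_exp_le hs (by positivity : 0 ≤ n * ε) _).trans_eq ?_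
    ring_nf
  have linear : Integrable (fun g => (Real.log 2 - n * β + n * ε) + logGrowth g v) (mconvN μ n) :=
    (integrable_const _).add growth
  have integral_le := integral_mono (integrable_log_one_add_mul_norm hμ n (Real.exp_pos _).le v)
    (linear.add (exp_integrable.const_mul s⁻¹)) pointwise
  simp only [Pi.add_apply] at integral_le
  rw [integral_add linear (exp_integrable.const_mul s⁻¹),
    integral_add (integrable_const _) growth, integral_const, probReal_univ, one_smul,
    integral_const_mul] at integral_le
  have hn0 : (0 : ℝ) < n := Nat.cast_pos.2 hn
  rw [excessGrowth, inv_mul_le_iff₀ hn0, mul_add, mul_div_cancel₀ _ hn0.ne']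
  have := mul_le_mul_of_nonneg_left exp_le (inv_pos.2 hs).le
  rw [meanGrowth] at hβ
  linarith

lemma tendsto_excessGrowth_of_meanGrowth_le (hμ : ∀ᵐ g ∂μ, NormBound M g) {β : ℝ}
    (hβ : Tendsto (fun n : ℕ => minGrowth μ n / n) atTop (𝓝 β)) {v : Ed d} (hv : ‖v‖ = 1)
    (hvβ : ∀ n : ℕ, 1 ≤ n → meanGrowth μ n v ≤ n * β) :
    Tendsto (fun n => excessGrowth μ β n v) atTop (𝓝 0) := by
  refine tendsto_order.2 ⟨fun a ha => Eventually.of_forall fun n =>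
    ha.trans_le (excessGrowth_nonneg μ β n v), fun ε hε => ?_⟩
  obtain ⟨s, C, hs, hC, tail⟩ :=
    exists_lintegral_exp_sub_logGrowth_le hμ hβ (sub_lt_self β (half_pos hε))
  have limit : Tendsto (fun n : ℕ => ε / 2 + (Real.log 2 + s⁻¹ * C) / n) atTop (𝓝 (ε / 2)) := by
    simpa using (tendsto_const_div_atTop_nhds_zero_nat (Real.log 2 + s⁻¹ * C)).const_add (ε / 2)
  filter_upwards [limit.eventually_lt_const (half_lt_self hε), eventually_ge_atTop 1] with n hlt hn
  exact (excessGrowth_le_of_lintegral_exp_le hμ (half_pos hε).le hs hC.le hn hv (hvβ n hn)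
    (tail n v (norm_ne_zero_iff.1 (hv ▸ one_ne_zero)))).trans_lt hlt

end ExcessGrowth

lemma exists_seq_ae_tendsto_zero_of_tendsto_integral {Ω : Type*} [MeasurableSpace Ω]
    {ν : Measure Ω} {l : Filter ℕ} [l.NeBot] [l.IsCountablyGenerated] {f : ℕ → Ω → ℝ}
    (hf0 : ∀ n ω, 0 ≤ f n ω) (hf : ∀ n, Integrable (f n) ν)
    (hlim : Tendsto (fun n => ∫ ω, f n ω ∂ν) l (𝓝 0)) :
    ∃ ns : ℕ → ℕ, Tendsto ns atTop l ∧
      ∀ᵐ ω ∂ν, Tendsto (fun k => f (ns k) ω) atTop (𝓝 0) := by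
  have norm_eq (n : ℕ) : eLpNorm (f n - 0) 1 ν = ENNReal.ofReal (∫ ω, f n ω ∂ν) := by
    rw [sub_zero, eLpNorm_one_eq_lintegral_enorm, ← ofReal_integral_norm_eq_lintegral_enorm (hf n)]
    simp only [Real.norm_of_nonneg (hf0 n _)]
  have norm_lim : Tendsto (fun n => eLpNorm (f n - 0) 1 ν) l (𝓝 0) := by
    simpa only [norm_eq, ENNReal.ofReal_zero] using ENNReal.tendsto_ofReal hlim
  exact (tendstoInMeasure_of_tendsto_eLpNorm one_ne_zero (fun n => (hf n).aestronglyMeasurable)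
    aestronglyMeasurable_const norm_lim).exists_seq_tendsto_ae'

section SlowSubspace

variable {μ : Measure (GLd d)} [IsProbabilityMeasure μ] {M : ℝ}

/-- The subspace of vectors whose norm grows at rate at most `β` in mean along the times given by
the filter `l`. Working along a filter lets one pass to a sequence of times. -/
def slowSubspace (hμ : ∀ᵐ g ∂μ, NormBound M g) (β : ℝ) {l : Filter ℕ} (hl : l ≤ atTop) :
    Submodule ℝ (Ed d) where
  carrier := {w | Tendsto (fun n => excessGrowth μ β n w) l (𝓝 0)}
  zero_mem' := by simpa only [Set.mem_ofPred_eq, excessGrowth_zero] using tendsto_const_nhds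
  add_mem' {w₁ w₂} h₁ h₂ := squeeze_zero (fun n => excessGrowth_nonneg μ β n _)
    (fun n => excessGrowth_add_le hμ β n w₁ w₂) (by simpa using h₁.add h₂)
  smul_mem' a w h := squeeze_zero (fun n => excessGrowth_nonneg μ β n _)
    (fun n => excessGrowth_smul_le hμ β n a w)
    (by simpa using
      h.add ((tendsto_const_div_atTop_nhds_zero_nat (Real.log (1 + |a|))).mono_left hl))

lemma slowSubspace_mono (hμ : ∀ᵐ g ∂μ, NormBound M g) (β : ℝ) {l l' : Filter ℕ} (hl : l ≤ atTop)
    (h : l' ≤ l) : slowSubspace hμ β hl ≤ slowSubspace hμ β (h.trans hl) :=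
  fun _ hw => hw.mono_left h

lemma tendsto_integral_excessGrowth_glCLM (hμ : ∀ᵐ g ∂μ, NormBound M g) {β : ℝ} {l : Filter ℕ}
    {hl : l ≤ atTop} {w : Ed d} (hw : w ∈ slowSubspace hμ β hl) :
    Tendsto (fun n => ∫ h, excessGrowth μ β n (glCLM h w) ∂μ) l (𝓝 0) :=
  squeeze_zero (fun n => integral_nonneg fun _ => excessGrowth_nonneg μ β n _)
    (fun n => integral_excessGrowth_glCLM_le hμ β n w)
    (by simpa using
      hw.add ((tendsto_const_div_atTop_nhds_zero_nat (Real.log (1 + M))).mono_left hl))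

lemma exists_seq_ae_map_slowSubspace_le (hμ : ∀ᵐ g ∂μ, NormBound M g) (β : ℝ) {l : Filter ℕ}
    [l.NeBot] [l.IsCountablyGenerated] (hl : l ≤ atTop) :
    ∃ (ns : ℕ → ℕ) (hns : Tendsto ns atTop l), ∀ᵐ g ∂μ,
      (slowSubspace hμ β hl).map (glCLM g).toLinearMap ≤ slowSubspace hμ β (hns.trans hl) := by
  obtain ⟨S, hS⟩ := IsNoetherian.noetherian (slowSubspace hμ β hl)
  have hSW (w : Ed d) (hw : w ∈ S) : w ∈ slowSubspace hμ β hl :=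
    hS ▸ Submodule.subset_span (Finset.mem_coe.2 hw)
  obtain ⟨ns, hns, hlim⟩ := exists_seq_ae_tendsto_zero_of_tendsto_integral (ν := μ) (l := l)
    (f := fun n h => ∑ w ∈ S, excessGrowth μ β n (glCLM h w))
    (fun n h => Finset.sum_nonneg fun w _ => excessGrowth_nonneg μ β n _)
    (fun n => integrable_finsetSum S fun w _ => integrable_excessGrowth_glCLM hμ β n w) (by
      simp only [integral_finsetSum S fun w _ => integrable_excessGrowth_glCLM hμ β _ w]
      simpa using tendsto_finsetSum S fun w hw =>
        tendsto_integral_excessGrowth_glCLM hμ (hSW w hw))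
  refine ⟨ns, hns, hlim.mono fun g hg => ?_⟩
  rw [← hS, Submodule.map_span_le]
  intro w hw
  exact tendsto_map'_iff.2 (squeeze_zero (fun k => excessGrowth_nonneg μ β _ _)
    (fun k => Finset.single_le_sum (f := fun w => excessGrowth μ β (ns k) (glCLM g w))
      (fun w _ => excessGrowth_nonneg μ β _ _) (Finset.mem_coe.1 hw)) hg)

/-- A maximal slow subspace is invariant: its images under almost every `g` lie in a slow subspace
along a subsequence, which by maximality is no larger. -/
lemma exists_ae_map_slowSubspace_eq (hμ : ∀ᵐ g ∂μ, NormBound M g) (β : ℝ) :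
    ∃ (l : Filter ℕ) (hl : l ≤ atTop), l.NeBot ∧ ∀ᵐ g ∂μ,
      (slowSubspace hμ β hl).map (glCLM g).toLinearMap = slowSubspace hμ β hl := by
  obtain ⟨V, ⟨l, hl, hbot, hcount, rfl⟩, maximal⟩ := exists_maximal_of_wellFoundedGT
    (fun V : Submodule ℝ (Ed d) => ∃ (l : Filter ℕ) (hl : l ≤ atTop),
      l.NeBot ∧ l.IsCountablyGenerated ∧ V = slowSubspace hμ β hl)
    ⟨_, atTop, le_rfl, inferInstance, inferInstance, rfl⟩
  obtain ⟨ns, hns, hmap⟩ := exists_seq_ae_map_slowSubspace_le hμ β hl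
  refine ⟨l, hl, hbot, hmap.mono fun g hg => ?_⟩
  refine Submodule.eq_of_le_of_finrank_eq (hg.trans (maximal
    ⟨_, _, map_neBot, inferInstance, rfl⟩ (slowSubspace_mono hμ β hl hns))) ?_
  exact (Submodule.equivMapOfInjective _ (glLinear_injective g) _).finrank_eq.symm

end SlowSubspace

/-! ### Growth on invariant subspaces -/

/-- The operator norm of the restriction of `g` to the subspace `V`. -/
def restrictNorm (V : Submodule ℝ (Ed d)) (g : GLd d) : ℝ := ‖(glCLM g).comp V.subtypeL‖

lemma norm_domRestrict_glCLM (V : Submodule ℝ (Ed d)) (g : GLd d) :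
    ‖LinearMap.toContinuousLinearMap ((glCLM g).toLinearMap.domRestrict V)‖ = restrictNorm V g :=
  congrArg norm (ContinuousLinearMap.ext fun _ => rfl)

lemma continuous_restrictNorm (V : Submodule ℝ (Ed d)) :
    Continuous (restrictNorm V : GLd d → ℝ) :=
  (continuous_glCLM.clm_comp continuous_const).norm

lemma norm_glCLM_le_restrictNorm_mul (g : GLd d) {V : Submodule ℝ (Ed d)} {v : Ed d}
    (hv : v ∈ V) : ‖glCLM g v‖ ≤ restrictNorm V g * ‖v‖ :=
  ((glCLM g).comp V.subtypeL).le_opNorm ⟨v, hv⟩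

lemma restrictNorm_le {V : Submodule ℝ (Ed d)} {g : GLd d} {C : ℝ} (hC : 0 ≤ C)
    (h : ∀ v ∈ V, ‖glCLM g v‖ ≤ C * ‖v‖) : restrictNorm V g ≤ C :=
  ContinuousLinearMap.opNorm_le_bound _ hC fun v => h v v.2

lemma restrictNorm_nonneg (V : Submodule ℝ (Ed d)) (g : GLd d) : 0 ≤ restrictNorm V g :=
  norm_nonneg ((glCLM g).comp V.subtypeL)

lemma restrictNorm_top (g : GLd d) : restrictNorm ⊤ g = gnorm g :=
  le_antisymm (restrictNorm_le (gnorm_nonneg g) fun v _ => norm_glCLM_le g v)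
    (ContinuousLinearMap.opNorm_le_bound _ (restrictNorm_nonneg _ _) fun _ =>
      norm_glCLM_le_restrictNorm_mul g Submodule.mem_top)

lemma L1rest_top (μ : Measure (GLd d)) : L1rest μ ⊤ = L1 μ := by
  simp only [L1rest, L1, norm_domRestrict_glCLM, restrictNorm_top]

lemma restrictNorm_pos {V : Submodule ℝ (Ed d)} (hV : V ≠ ⊥) (g : GLd d) :
    0 < restrictNorm V g := by
  obtain ⟨v, hv, hv0⟩ := Submodule.exists_mem_ne_zero_of_ne_bot hV
  exact pos_of_mul_pos_left
    ((norm_glCLM_pos g hv0).trans_le (norm_glCLM_le_restrictNorm_mul g hv)) (norm_nonneg v)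

lemma NormBound.abs_log_restrictNorm_le {R : ℝ} {g : GLd d} (hg : NormBound R g)
    {V : Submodule ℝ (Ed d)} (hV : V ≠ ⊥) : |Real.log (restrictNorm V g)| ≤ Real.log R := by
  obtain ⟨v, hv, hv0⟩ := Submodule.exists_mem_ne_zero_of_ne_bot hV
  have upper : restrictNorm V g ≤ R := restrictNorm_le hg.nonneg fun v _ => hg.norm_glCLM_le v
  have lower : logGrowth g v ≤ Real.log (restrictNorm V g) := by
    rw [Real.le_log_iff_exp_le (restrictNorm_pos hV g), exp_logGrowth g hv0,
      div_le_iff₀ (norm_pos_iff.2 hv0)]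
    exact norm_glCLM_le_restrictNorm_mul g hv
  exact abs_le.2 ⟨(abs_le.1 (hg.abs_logGrowth_le hv0)).1.trans lower,
    Real.log_le_log (restrictNorm_pos hV g) upper⟩

lemma restrictNorm_mul_le {V : Submodule ℝ (Ed d)} (g : GLd d) {h : GLd d}
    (hh : ∀ v ∈ V, glCLM h v ∈ V) : restrictNorm V (g * h) ≤ restrictNorm V g * restrictNorm V h :=
  restrictNorm_le (mul_nonneg (restrictNorm_nonneg V g) (restrictNorm_nonneg V h)) fun v hv => by
    rw [glCLM_mul_apply, mul_assoc]
    exact (norm_glCLM_le_restrictNorm_mul g (hh v hv)).trans (mul_le_mul_of_nonneg_left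
      (norm_glCLM_le_restrictNorm_mul h hv) (restrictNorm_nonneg V g))

lemma measurableSet_forall_glCLM_mem (V : Submodule ℝ (Ed d)) :
    MeasurableSet {h : GLd d | ∀ v ∈ V, glCLM h v ∈ V} := by
  simp only [Set.ofPred_forall]
  exact (isClosed_biInter fun v _ =>
    V.closed_of_finiteDimensional.preimage (continuous_glCLM_apply v)).measurableSet

lemma log_le_log_one_add_add_sum {ι : Type*} [Fintype ι] {a : ι → ℝ} (ha : ∀ i, 0 ≤ a i)
    {r C : ℝ} (hr : 0 < r) (hC : 0 ≤ C) (h : r ≤ C * ∑ i, a i) :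
    Real.log r ≤ Real.log (1 + C) + ∑ i, Real.log (1 + a i) := by
  have hsum : 0 ≤ ∑ i, a i := Finset.sum_nonneg fun i _ => ha i
  have log_sum_le : Real.log (1 + ∑ i, a i) ≤ ∑ i, Real.log (1 + a i) :=
    Finset.le_sum_of_subadditive_on_pred (fun x => Real.log (1 + x)) (fun x => 0 ≤ x)
      (by simp) (fun x y hx hy => by
        rw [← Real.log_mul (by positivity) (by positivity)]
        exact Real.log_le_log (by positivity) (by nlinarith [mul_nonneg hx hy]))
      (fun _ _ => add_nonneg) a fun i _ => ha i
  calc Real.log r ≤ Real.log ((1 + C) * (1 + ∑ i, a i)) := Real.log_le_log hr (by nlinarith)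
    _ = Real.log (1 + C) + Real.log (1 + ∑ i, a i) :=
        Real.log_mul (by positivity) (by positivity)
    _ ≤ Real.log (1 + C) + ∑ i, Real.log (1 + a i) := by gcongr

section InvariantSubspace

variable {μ : Measure (GLd d)} [IsProbabilityMeasure μ] {M : ℝ} {V : Submodule ℝ (Ed d)}

lemma ae_mconvN_forall_glCLM_mem (hV : ∀ᵐ g ∂μ, V.map (glCLM g).toLinearMap = V) (n : ℕ) :
    ∀ᵐ h ∂(mconvN μ n), ∀ v ∈ V, glCLM h v ∈ V := by
  induction n with
  | zero =>
    rw [mconvN, ae_dirac_iff (measurableSet_forall_glCLM_mem V)]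
    intro v hv
    rwa [glCLM_one]
  | succ n ih =>
    rw [mconvN_succ]
    refine ae_mconv (measurableSet_forall_glCLM_mem V) ih hV fun g h hg hh v hv => ?_
    rw [glCLM_mul_apply]
    exact hg _ (hh ▸ Submodule.mem_map_of_mem hv)

lemma ae_abs_log_restrictNorm_le (hμ : ∀ᵐ g ∂μ, NormBound M g) (hV : V ≠ ⊥) (n : ℕ) :
    ∀ᵐ g ∂(mconvN μ n), |Real.log (restrictNorm V g)| ≤ n * Real.log M := by
  filter_upwards [ae_normBound_mconvN hμ n] with g hg
  simpa only [Real.log_pow] using hg.abs_log_restrictNorm_le hV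

lemma tendsto_L1rest (hμ : ∀ᵐ g ∂μ, NormBound M g) (hV : V ≠ ⊥)
    (hinv : ∀ᵐ g ∂μ, V.map (glCLM g).toLinearMap = V) :
    Tendsto (fun n : ℕ => (n : ℝ)⁻¹ * ∫ g, Real.log (restrictNorm V g) ∂(mconvN μ n)) atTop
      (𝓝 (L1rest μ V)) := by
  simp only [L1rest, norm_domRestrict_glCLM]
  refine tendsto_nhds_limUnder (tendsto_integral_mconvN_of_subadditive μ
    (continuous_restrictNorm V).measurable.log (ae_abs_log_restrictNorm_le hμ hV) fun n => ?_)
  filter_upwards [ae_mconvN_forall_glCLM_mem hinv n] with h hh g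
  rw [← Real.log_mul (restrictNorm_pos hV g).ne' (restrictNorm_pos hV h).ne']
  exact Real.log_le_log (restrictNorm_pos hV _) (restrictNorm_mul_le g hh)

lemma integral_log_restrictNorm_le (hμ : ∀ᵐ g ∂μ, NormBound M g) (hV : V ≠ ⊥) {ι : Type*}
    [Fintype ι] {b : ι → Ed d} {C : ℝ} (hC : 0 ≤ C)
    (hb : ∀ g, restrictNorm V g ≤ C * ∑ i, ‖glCLM g (b i)‖) (β : ℝ) {n : ℕ} (hn : 1 ≤ n) :
    (n : ℝ)⁻¹ * ∫ g, Real.log (restrictNorm V g) ∂(mconvN μ n) ≤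
      β + (Real.log (1 + C) / n + ∑ i, excessGrowth μ β n (b i)) := by
  set e := Real.exp (-(n * β)) with he
  have hn0 : (n : ℝ) ≠ 0 := Nat.cast_ne_zero.2 (Nat.one_le_iff_ne_zero.1 hn)
  have integrable (i : ι) :=
    integrable_log_one_add_mul_norm hμ n (Real.exp_pos (-(n * β))).le (b i)
  have integrable_sum := integrable_finsetSum Finset.univ fun i _ => integrable i
  have pointwise (g : GLd d) : Real.log (restrictNorm V g) ≤
      (n * β + Real.log (1 + C)) + ∑ i, Real.log (1 + e * ‖glCLM g (b i)‖) := by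
    have hr := restrictNorm_pos hV g
    have scaled : e * restrictNorm V g ≤ C * ∑ i, e * ‖glCLM g (b i)‖ := by
      rw [← Finset.mul_sum, mul_left_comm]
      exact mul_le_mul_of_nonneg_left (hb g) (Real.exp_pos _).le
    have hlog := log_le_log_one_add_add_sum (fun i => by positivity)
      (mul_pos (Real.exp_pos _) hr) hC scaled
    rw [Real.log_mul (Real.exp_pos _).ne' hr.ne', he, Real.log_exp] at hlog
    linarith
  have integral_le := integral_mono
    (Integrable.of_bound (continuous_restrictNorm V).measurable.log.aestronglyMeasurable _
      (ae_abs_log_restrictNorm_le hμ hV n))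
    ((integrable_const _).add integrable_sum) pointwise
  simp only [Pi.add_apply] at integral_le
  rw [integral_add (integrable_const _) integrable_sum,
    integral_finsetSum _ fun i _ => integrable i, integral_const, probReal_univ, one_smul]
    at integral_le
  refine (mul_le_mul_of_nonneg_left integral_le (by positivity)).trans_eq ?_
  simp only [excessGrowth, ← Finset.mul_sum]
  field_simp
  ring

lemma L1rest_slowSubspace_le (hμ : ∀ᵐ g ∂μ, NormBound M g) {β : ℝ} {l : Filter ℕ} [l.NeBot]
    (hl : l ≤ atTop) (hne : slowSubspace hμ β hl ≠ ⊥) (hinv : ∀ᵐ g ∂μ,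
      (slowSubspace hμ β hl).map (glCLM g).toLinearMap = slowSubspace hμ β hl) :
    L1rest μ (slowSubspace hμ β hl) ≤ β := by
  set V := slowSubspace hμ β hl
  let b := Module.finBasis ℝ V
  obtain ⟨C, hC, opNorm_le⟩ := b.exists_opNorm_le (F := Ed d)
  have hb (g : GLd d) : restrictNorm V g ≤ C * ∑ i, ‖glCLM g (b i)‖ :=
    opNorm_le (by positivity) fun i => Finset.single_le_sum
      (f := fun i => ‖glCLM g (b i)‖) (fun i _ => norm_nonneg _) (Finset.mem_univ i)
  have limit : Tendsto (fun n : ℕ =>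
      β + (Real.log (1 + C) / n + ∑ i, excessGrowth μ β n (b i))) l (𝓝 β) := by
    simpa using (((tendsto_const_div_atTop_nhds_zero_nat (Real.log (1 + C))).mono_left hl).add
      (tendsto_finsetSum Finset.univ fun i _ => (b i).2)).const_add β
  refine le_of_tendsto_of_tendsto ((tendsto_L1rest hμ hne hinv).mono_left hl) limit ?_
  filter_upwards [hl (eventually_ge_atTop 1)] with n hn
  exact integral_log_restrictNorm_le hμ hne hC.le hb β hn

lemma QuasiIrreducible.L1_le [NeZero d] (hqi : QuasiIrreducible μ)
    (hμ : ∀ᵐ g ∂μ, NormBound M g) {β : ℝ}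
    (hβ : Tendsto (fun n : ℕ => minGrowth μ n / n) atTop (𝓝 β)) : L1 μ ≤ β := by
  obtain ⟨v, hv, hvβ⟩ := exists_forall_meanGrowth_le hμ hβ
  obtain ⟨l, hl, _, hinv⟩ := exists_ae_map_slowSubspace_eq hμ β
  have hvl : v ∈ slowSubspace hμ β hl :=
    (tendsto_excessGrowth_of_meanGrowth_le hμ hβ hv hvβ).mono_left hl
  have hne : slowSubspace hμ β hl ≠ ⊥ :=
    Submodule.ne_bot_iff _ |>.2 ⟨v, hvl, norm_ne_zero_iff.1 (hv ▸ one_ne_zero)⟩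
  have hle := L1rest_slowSubspace_le hμ hl hne hinv
  by_cases htop : slowSubspace hμ β hl = ⊤
  · rwa [htop, L1rest_top] at hle
  · by_contra! hlt
    exact hqi ⟨_, hne, htop, hinv, hle.trans_lt hlt⟩

end InvariantSubspace

/-! ### Contraction on average -/

/-- The largest exponential rate `log (s₁ s₂ ‖v‖ ‖w‖ / (‖g v‖ ‖g w‖))` at which `g` can move the
directions of `v` and `w` apart. -/
def logExpansion (g : GLd d) (v w : Ed d) : ℝ := Real.log (N2 g) - logGrowth g v - logGrowth g w

lemma measurable_logExpansion (v w : Ed d) : Measurable fun g : GLd d => logExpansion g v w :=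
  (lowerSemicontinuous_N2.measurable.log.sub (measurable_logGrowth_left v)).sub
    (measurable_logGrowth_left w)

/-- The average `α`-Hölder constant `k_α(ν)` of the projective action is at most `κ`. Unlike
`kalpha`, the averages are Lebesgue integrals and the quotient by `δ(x, y) ^ α` is cleared, so that
neither integrability nor `x ≠ y` has to be assumed. -/
def AverageHolderLE (α : ℝ) (κ : ℝ≥0∞) (ν : Measure (GLd d)) : Prop :=
  ∀ x y : Pd d, ∫⁻ g, ENNReal.ofReal (pdelta (pact g x) (pact g y) ^ α) ∂ν ≤
    κ * ENNReal.ofReal (pdelta x y ^ α)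

section Gap

variable {μ : Measure (GLd d)} [IsProbabilityMeasure μ] {M : ℝ}

lemma ae_abs_log_N2_le (hd : 2 ≤ d) (hμ : ∀ᵐ g ∂μ, NormBound M g) (n : ℕ) :
    ∀ᵐ g ∂(mconvN μ n), |Real.log (N2 g)| ≤ n * (2 * Real.log M) := by
  filter_upwards [ae_normBound_mconvN hμ n] with g hg
  simpa only [Real.log_pow, mul_left_comm] using hg.abs_log_N2_le hd

lemma tendsto_L12 (hd : 2 ≤ d) (hμ : ∀ᵐ g ∂μ, NormBound M g) :
    Tendsto (fun n : ℕ => (n : ℝ)⁻¹ * ∫ g, Real.log (N2 g) ∂(mconvN μ n)) atTop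
      (𝓝 (L12 μ)) := by
  refine tendsto_nhds_limUnder (tendsto_integral_mconvN_of_subadditive μ
    lowerSemicontinuous_N2.measurable.log (ae_abs_log_N2_le hd hμ) fun n =>
      ae_of_all _ fun h g => ?_)
  rw [← Real.log_mul (N2_pos hd g).ne' (N2_pos hd h).ne']
  exact Real.log_le_log (N2_pos hd _) (N2_mul_le g h)

lemma QuasiIrreducible.exists_integral_log_N2_lt (hqi : QuasiIrreducible μ) (hd : 2 ≤ d)
    (hμ : ∀ᵐ g ∂μ, NormBound M g) (hgap : L2 μ < L1 μ) :
    ∃ n : ℕ, 1 ≤ n ∧ ∫ g, Real.log (N2 g) ∂(mconvN μ n) < 2 * minGrowth μ n := by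
  have : NeZero d := ⟨by omega⟩
  obtain ⟨β, hβ⟩ := exists_tendsto_minGrowth_div hμ
  have hlt : L12 μ < 2 * β := by
    have hβ' := hqi.L1_le hμ hβ
    rw [L2] at hgap
    linarith
  obtain ⟨n, hn, hn1⟩ := (((tendsto_L12 hd hμ).eventually_lt (hβ.const_mul 2) hlt).and
    (eventually_ge_atTop 1)).exists
  refine ⟨n, hn1, ?_⟩
  have hn0 : (0 : ℝ) < n := Nat.cast_pos.2 hn1
  rwa [← mul_div_assoc, inv_mul_eq_div, div_lt_div_iff_of_pos_right hn0] at hn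

lemma ae_abs_logExpansion_le (hd : 2 ≤ d) (hμ : ∀ᵐ g ∂μ, NormBound M g) (n : ℕ) {v w : Ed d}
    (hv : v ≠ 0) (hw : w ≠ 0) :
    ∀ᵐ g ∂(mconvN μ n), |logExpansion g v w| ≤ 4 * (n * Real.log M) := by
  filter_upwards [ae_abs_log_N2_le hd hμ n, ae_abs_logGrowth_le hμ n hv,
    ae_abs_logGrowth_le hμ n hw] with g hN hgv hgw
  rw [logExpansion, abs_le]
  rw [abs_le] at hN hgv hgw
  constructor <;> linarith

lemma integral_logExpansion_le (hd : 2 ≤ d) (hμ : ∀ᵐ g ∂μ, NormBound M g) (n : ℕ) {v w : Ed d}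
    (hv : v ≠ 0) (hw : w ≠ 0) : ∫ g, logExpansion g v w ∂(mconvN μ n) ≤
      ∫ g, Real.log (N2 g) ∂(mconvN μ n) - 2 * minGrowth μ n := by
  have integrable_N2 : Integrable (fun g => Real.log (N2 g)) (mconvN μ n) :=
    Integrable.of_bound lowerSemicontinuous_N2.measurable.log.aestronglyMeasurable _
      (ae_abs_log_N2_le hd hμ n)
  have integrable_v := integrable_logGrowth hμ n hv
  have integral_eq : ∫ g, logExpansion g v w ∂(mconvN μ n) =
      ∫ g, Real.log (N2 g) ∂(mconvN μ n) - meanGrowth μ n v - meanGrowth μ n w := by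
    rw [meanGrowth, meanGrowth, ← integral_sub integrable_N2 integrable_v]
    exact integral_sub (integrable_N2.sub integrable_v) (integrable_logGrowth hμ n hw)
  linarith [minGrowth_le hμ n hv, minGrowth_le hμ n hw]

lemma ofReal_pdelta_pact_rpow_le (hd : 2 ≤ d) {α : ℝ} (hα : 0 ≤ α) (g : GLd d) (x y : Pd d) :
    ENNReal.ofReal (pdelta (pact g x) (pact g y) ^ α) ≤
      ENNReal.ofReal (Real.exp (α * logExpansion g x.rep y.rep)) *
        ENNReal.ofReal (pdelta x y ^ α) := by
  rw [← ENNReal.ofReal_mul (Real.exp_pos _).le, mul_comm α, Real.exp_mul,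
    ← Real.mul_rpow (Real.exp_pos _).le (pdelta_nonneg x y)]
  exact ENNReal.ofReal_le_ofReal
    (Real.rpow_le_rpow (pdelta_nonneg _ _) (pdelta_pact_le_exp hd g x y) hα)

lemma QuasiIrreducible.exists_averageHolderLE_mconvN (hqi : QuasiIrreducible μ) (hd : 2 ≤ d)
    (hμ : ∀ᵐ g ∂μ, NormBound M g) (hgap : L2 μ < L1 μ) :
    ∃ α κ : ℝ, 0 < α ∧ α ≤ 1 ∧ 0 < κ ∧ κ < 1 ∧
      ∃ n : ℕ, 1 ≤ n ∧ AverageHolderLE α (ENNReal.ofReal κ) (mconvN μ n) := by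
  have hM : 0 ≤ Real.log M := by
    have : NeZero d := ⟨by omega⟩
    exact hμ.exists.elim fun g hg => Real.log_nonneg hg.one_le
  obtain ⟨n, hn, hlt⟩ := hqi.exists_integral_log_N2_lt hd hμ hgap
  obtain ⟨α, κ, hα, hα1, hκ, hκ1, moment_le⟩ := exists_lintegral_exp_mul_le (Ω := GLd d)
    (by positivity : 0 ≤ 4 * (n * Real.log M)) (sub_pos.2 hlt)
  refine ⟨α, κ, hα, hα1, hκ, hκ1, n, hn, fun x y => ?_⟩
  refine (lintegral_mono fun g => ofReal_pdelta_pact_rpow_le hd hα.le g x y).trans ?_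
  rw [lintegral_mul_const' _ _ ENNReal.ofReal_ne_top]
  gcongr
  refine moment_le _ _ (measurable_logExpansion _ _).aemeasurable
    (ae_abs_logExpansion_le hd hμ n x.rep_nonzero y.rep_nonzero) ?_
  rw [neg_sub]
  exact integral_logExpansion_le hd hμ n x.rep_nonzero y.rep_nonzero

end Gap

lemma measurable_ofReal_pdelta_pact_rpow (α : ℝ) (x y : Pd d) :
    Measurable fun g : GLd d => ENNReal.ofReal (pdelta (pact g x) (pact g y) ^ α) :=
  ((continuous_pdelta_pact continuous_id continuous_id x y).measurable.pow_const α).ennreal_ofReal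

namespace AverageHolderLE

variable {α : ℝ} {κ κ' : ℝ≥0∞} {μ ν ρ : Measure (GLd d)}

lemma mono (h : AverageHolderLE α κ ν) (hκ : κ ≤ κ') : AverageHolderLE α κ' ν :=
  fun x y => (h x y).trans (by gcongr)

lemma of_le_add (hν : AverageHolderLE α κ ν) (hρ : AverageHolderLE α κ' ρ) (hle : μ ≤ ν + ρ) :
    AverageHolderLE α (κ + κ') μ := fun x y => by
  refine (lintegral_mono' hle le_rfl).trans ?_
  rw [lintegral_add_measure, add_mul]
  exact add_le_add (hν x y) (hρ x y)

lemma of_ae_normBound (hα : 0 ≤ α) {R : ℝ} (hρ : ∀ᵐ g ∂ρ, NormBound R g) :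
    AverageHolderLE α (ENNReal.ofReal ((R ^ 4) ^ α) * ρ Set.univ) ρ := fun x y => by
  have pointwise : ∀ᵐ g ∂ρ, ENNReal.ofReal (pdelta (pact g x) (pact g y) ^ α) ≤
      ENNReal.ofReal ((R ^ 4) ^ α) * ENNReal.ofReal (pdelta x y ^ α) := by
    filter_upwards [hρ] with g hg
    rw [← ENNReal.ofReal_mul (by positivity), ← Real.mul_rpow (by positivity) (pdelta_nonneg x y)]
    exact ENNReal.ofReal_le_ofReal
      (Real.rpow_le_rpow (pdelta_nonneg _ _) (hg.pdelta_pact_le x y) hα)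
  refine (lintegral_mono_ae pointwise).trans_eq ?_
  rw [lintegral_const, mul_right_comm]

lemma mconv [SFinite μ] [SFinite ν] (hμ : AverageHolderLE α κ μ) (hν : AverageHolderLE α κ' ν) :
    AverageHolderLE α (κ * κ') (mconv μ ν) := fun x y => by
  rw [lintegral_mconv_symm μ ν (measurable_ofReal_pdelta_pact_rpow α x y)]
  simp only [pact_mul]
  calc ∫⁻ h, ∫⁻ g, ENNReal.ofReal (pdelta (pact g (pact h x)) (pact g (pact h y)) ^ α) ∂μ ∂ν
      ≤ ∫⁻ h, κ * ENNReal.ofReal (pdelta (pact h x) (pact h y) ^ α) ∂ν :=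
        lintegral_mono fun h => hμ (pact h x) (pact h y)
    _ = κ * ∫⁻ h, ENNReal.ofReal (pdelta (pact h x) (pact h y) ^ α) ∂ν :=
        lintegral_const_mul _ (measurable_ofReal_pdelta_pact_rpow α x y)
    _ ≤ κ * κ' * ENNReal.ofReal (pdelta x y ^ α) := by
        rw [mul_assoc]
        exact mul_le_mul_right (hν x y) κ

lemma mconvN_mul [SFinite μ] {N : ℕ} (h : AverageHolderLE α κ (mconvN μ N)) (q : ℕ) :
    AverageHolderLE α (κ ^ q) (mconvN μ (N * q)) := by
  induction q with
  | zero =>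
    intro x y
    rw [mul_zero, mconvN, lintegral_dirac' _ (measurable_ofReal_pdelta_pact_rpow α x y), pact_one,
      pact_one, pow_zero, one_mul]
  | succ q ih =>
    rw [Nat.mul_succ, mconvN_add, pow_succ]
    exact ih.mconv h

end AverageHolderLE

/-! ### Perturbation in total variation -/

lemma le_add_totalVariation_toSignedMeasure_sub {Ω : Type*} [MeasurableSpace Ω] (μ ν : Measure Ω)
    [IsFiniteMeasure μ] [IsFiniteMeasure ν] :
    μ ≤ ν + (μ.toSignedMeasure - ν.toSignedMeasure).totalVariation := by
  refine Measure.le_iff.2 fun s hs => ?_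
  set σ := μ.toSignedMeasure - ν.toSignedMeasure with hσ
  have real_le : μ.real s ≤ (ν + σ.totalVariation).real s := by
    have hle := (le_abs_self _).trans (σ.norm_le_totalVariation s)
    rw [hσ, Measure.toSignedMeasure_sub_apply hs, ← hσ] at hle
    rw [measureReal_add_apply]
    linarith
  exact (ENNReal.toReal_le_toReal (measure_ne_top _ _) (measure_ne_top _ _)).1 real_le

lemma mconv_mono {μ μ' ν ν' : Measure (GLd d)} [SFinite ν'] (hμ : μ ≤ μ') (hν : ν ≤ ν') :
    mconv μ ν ≤ mconv μ' ν' :=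
  Measure.map_mono (Measure.prod_mono hμ hν) (by fun_prop)

lemma mconv_univ (μ ν : Measure (GLd d)) [SFinite ν] :
    mconv μ ν Set.univ = μ Set.univ * ν Set.univ := by
  rw [mconv, Measure.map_apply (by fun_prop) MeasurableSet.univ, Set.preimage_univ,
    ← Set.univ_prod_univ, Measure.prod_prod]

lemma exists_mconvN_le_add {μ ν ρ : Measure (GLd d)} [IsProbabilityMeasure μ]
    [IsProbabilityMeasure ν] [SFinite ρ] (h : μ ≤ ν + ρ) (n : ℕ) :
    ∃ ρ' : Measure (GLd d), SFinite ρ' ∧ mconvN μ n ≤ mconvN ν n + ρ' ∧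
      ρ' Set.univ = n * ρ Set.univ := by
  induction n with
  | zero => exact ⟨0, inferInstance, by simp [mconvN], by simp⟩
  | succ n ih =>
    obtain ⟨ρ', _, hle, hρ'⟩ := ih
    refine ⟨mconv (mconvN ν n) ρ + mconv ρ' μ, inferInstance, ?_, ?_⟩
    · rw [mconvN_succ, mconvN_succ]
      calc mconv (mconvN μ n) μ ≤ mconv (mconvN ν n + ρ') μ := mconv_mono hle le_rfl
        _ = mconv (mconvN ν n) μ + mconv ρ' μ := Measure.add_mconv _ _ _
        _ ≤ mconv (mconvN ν n) (ν + ρ) + mconv ρ' μ := by gcongr; exact mconv_mono le_rfl h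
        _ = mconv (mconvN ν n) ν + (mconv (mconvN ν n) ρ + mconv ρ' μ) := by
            rw [← add_assoc]
            congr 1
            exact Measure.mconv_add _ _ _
    · rw [Measure.add_apply, mconv_univ, mconv_univ, measure_univ (μ := mconvN ν n),
        measure_univ (μ := μ), hρ', one_mul, mul_one]
      push_cast
      ring

lemma AverageHolderLE.of_tvDist_le {μ ν : Measure (GLd d)} [IsProbabilityMeasure μ]
    [IsProbabilityMeasure ν] {M α ε : ℝ} {κ : ℝ≥0∞} {N : ℕ}
    (hν : AverageHolderLE α κ (mconvN ν N)) (hα : 0 ≤ α) (hμ : ∀ᵐ g ∂μ, NormBound M g)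
    (hε : tvDist μ ν ≤ ε) :
    AverageHolderLE α
      (κ + ENNReal.ofReal (((M ^ N) ^ 4) ^ α) * (N * ENNReal.ofReal ε)) (mconvN μ N) := by
  obtain ⟨ρ, -, hle, hρ⟩ :=
    exists_mconvN_le_add (le_add_totalVariation_toSignedMeasure_sub μ ν) N
  set B := {g : GLd d | NormBound (M ^ N) g}
  have restrict_le : mconvN μ N ≤ mconvN ν N + ρ.restrict B :=
    calc mconvN μ N = (mconvN μ N).restrict B :=
          (Measure.restrict_eq_self_of_ae_mem (ae_normBound_mconvN hμ N)).symm
      _ ≤ (mconvN ν N + ρ).restrict B := Measure.restrict_mono le_rfl hle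
      _ ≤ mconvN ν N + ρ.restrict B := by
          rw [Measure.restrict_add]
          gcongr
          exact Measure.restrict_le_self
  have mass_le : ρ.restrict B Set.univ ≤ N * ENNReal.ofReal ε := by
    refine (Measure.restrict_le_self _).trans (hρ.trans_le ?_)
    gcongr
    rw [ENNReal.le_ofReal_iff_toReal_le (measure_ne_top _ _) (ENNReal.toReal_nonneg.trans hε)]
    exact hε
  have hB : ∀ᵐ g ∂(ρ.restrict B), NormBound (M ^ N) g :=
    ae_restrict_mem (measurableSet_normBound _)
  exact (hν.of_le_add (.of_ae_normBound hα hB) restrict_le).mono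
    (add_le_add le_rfl (mul_le_mul_right mass_le _))

/-! ### The Markov operator -/

/-- The `α`-Hölder condition on an observable with an explicit constant `c`. -/
def HolderBound (α c : ℝ) (φ : Pd d → ℝ) : Prop := ∀ x y, |φ x - φ y| ≤ c * pdelta x y ^ α

lemma valpha_nonneg (α : ℝ) (φ : Pd d → ℝ) : 0 ≤ valpha α φ := by
  refine Real.sSup_nonneg ?_
  rintro _ ⟨x, y, -, rfl⟩
  exact div_nonneg (abs_nonneg _) (Real.rpow_nonneg (pdelta_nonneg x y) α)

lemma IsHolder.holderBound_valpha {α : ℝ} {φ : Pd d → ℝ} (h : IsHolder α φ) :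
    HolderBound α (valpha α φ) φ := fun x y => by
  rcases eq_or_ne x y with rfl | hxy
  · rw [sub_self, abs_zero]
    exact mul_nonneg (valpha_nonneg α φ) (Real.rpow_nonneg (pdelta_nonneg x x) α)
  · rw [← div_le_iff₀ (Real.rpow_pos_of_pos (pdelta_pos hxy) α)]
    exact le_csSup h ⟨x, y, hxy, rfl⟩

namespace HolderBound

variable {α c : ℝ} {φ : Pd d → ℝ}

lemma valpha_le (h : HolderBound α c φ) (hc : 0 ≤ c) : valpha α φ ≤ c := by
  refine Real.sSup_le ?_ hc
  rintro _ ⟨x, y, hxy, rfl⟩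
  exact (div_le_iff₀ (Real.rpow_pos_of_pos (pdelta_pos hxy) α)).2 (h x y)

lemma continuous_comp_pact (h : HolderBound α c φ) (hα : 0 < α) (x : Pd d) :
    Continuous fun g : GLd d => φ (pact g x) := by
  refine continuous_iff_continuousAt.2 fun g₀ => ?_
  have modulus_continuous : Continuous fun g => c * pdelta (pact g x) (pact g₀ x) ^ α :=
    continuous_const.mul ((continuous_pdelta_pact continuous_id continuous_const x x).rpow_const
      fun _ => .inr hα.le)
  have modulus_tendsto := modulus_continuous.tendsto g₀
  rw [pdelta_self, Real.zero_rpow hα.ne', mul_zero] at modulus_tendsto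
  exact tendsto_iff_dist_tendsto_zero.2
    (squeeze_zero (fun _ => dist_nonneg) (fun g => h (pact g x) (pact g₀ x)) modulus_tendsto)

lemma integrable_comp_pact (h : HolderBound α c φ) (hα : 0 < α) (hc : 0 ≤ c)
    (μ : Measure (GLd d)) [IsFiniteMeasure μ] (x : Pd d) :
    Integrable (fun g => φ (pact g x)) μ := by
  refine .of_bound (h.continuous_comp_pact hα x).aestronglyMeasurable (|φ x| + c)
    (ae_of_all _ fun g => ?_)
  have dist_le : |φ (pact g x) - φ x| ≤ c := (h _ _).trans
    (mul_le_of_le_one_right hc (Real.rpow_le_one (pdelta_nonneg _ _) (pdelta_le_one _ _) hα.le))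
  rw [Real.norm_eq_abs]
  linarith [abs_sub_abs_le_abs_sub (φ (pact g x)) (φ x)]

lemma qop {κ : ℝ} {ν : Measure (GLd d)} [IsFiniteMeasure ν]
    (h : HolderBound α c φ) (hν : AverageHolderLE α (ENNReal.ofReal κ) ν) (hα : 0 < α)
    (hc : 0 ≤ c) (hκ : 0 ≤ κ) : HolderBound α (κ * c) (Qop ν φ) := fun x y => by
  have hδ : 0 ≤ pdelta x y ^ α := Real.rpow_nonneg (pdelta_nonneg x y) α
  rw [← ENNReal.ofReal_le_ofReal_iff (by positivity), ← Real.enorm_eq_ofReal_abs, Qop, Qop,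
    ← integral_sub (h.integrable_comp_pact hα hc ν x) (h.integrable_comp_pact hα hc ν y)]
  calc ‖∫ g, (φ (pact g x) - φ (pact g y)) ∂ν‖ₑ
      ≤ ∫⁻ g, ‖φ (pact g x) - φ (pact g y)‖ₑ ∂ν := enorm_integral_le_lintegral_enorm _
    _ ≤ ∫⁻ g, ENNReal.ofReal c * ENNReal.ofReal (pdelta (pact g x) (pact g y) ^ α) ∂ν := by
        refine lintegral_mono fun g => ?_
        rw [← ENNReal.ofReal_mul hc, Real.enorm_eq_ofReal_abs]
        exact ENNReal.ofReal_le_ofReal (h _ _)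
    _ = ENNReal.ofReal c * ∫⁻ g, ENNReal.ofReal (pdelta (pact g x) (pact g y) ^ α) ∂ν :=
        lintegral_const_mul _ (measurable_ofReal_pdelta_pact_rpow α x y)
    _ ≤ ENNReal.ofReal c * (ENNReal.ofReal κ * ENNReal.ofReal (pdelta x y ^ α)) :=
        mul_le_mul_right (hν x y) _
    _ = ENNReal.ofReal (κ * c * pdelta x y ^ α) := by
        rw [← ENNReal.ofReal_mul hκ, ← ENNReal.ofReal_mul hc]
        congr 1
        ring

lemma qop_mconv (h : HolderBound α c φ) (hα : 0 < α) (hc : 0 ≤ c) (μ ν : Measure (GLd d))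
    [IsFiniteMeasure μ] [IsFiniteMeasure ν] : Qop (mconv μ ν) φ = Qop ν (Qop μ φ) := by
  ext x
  rw [Qop, integral_mconv_symm (h.integrable_comp_pact hα hc _ x)]
  simp only [pact_mul, Qop]

lemma qop_iterate (h : HolderBound α c φ) (hα : 0 < α) (hc : 0 ≤ c) (μ : Measure (GLd d))
    [IsProbabilityMeasure μ] (n : ℕ) : (Qop μ)^[n] φ = Qop (mconvN μ n) φ := by
  induction n with
  | zero =>
    ext x
    rw [Function.iterate_zero_apply, mconvN, Qop,
      integral_dirac' _ _ (h.continuous_comp_pact hα x).stronglyMeasurable, pact_one]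
  | succ n ih =>
    rw [Function.iterate_succ_apply', ih, mconvN_succ, h.qop_mconv hα hc]

end HolderBound

/-! ### Uniform contraction -/

lemma pow_div_le_inv_mul_rpow {κ : ℝ} (hκ : 0 < κ) (hκ1 : κ ≤ 1) {N : ℕ} (hN : 1 ≤ N) (n : ℕ) :
    κ ^ (n / N) ≤ κ⁻¹ * (κ ^ (-(1 / N : ℝ))) ^ (-(n : ℝ)) := by
  have hN0 : (0 : ℝ) < N := by exact_mod_cast hN
  rw [← Real.rpow_mul hκ.le, ← Real.rpow_neg_one κ, ← Real.rpow_add hκ, ← Real.rpow_natCast]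
  refine Real.rpow_le_rpow_of_exponent_ge hκ hκ1 ?_
  have lt_floor : (n : ℝ) / N < ((n / N : ℕ) : ℝ) + 1 := by
    rw [div_lt_iff₀ hN0, add_one_mul, mul_comm]
    exact_mod_cast Nat.lt_mul_div_succ n hN
  calc (-1 : ℝ) + -(1 / (N : ℝ)) * -(n : ℝ) = n / N - 1 := by ring
    _ ≤ ((n / N : ℕ) : ℝ) := by linarith

lemma AverageHolderLE.mconvN_of_block {μ : Measure (GLd d)} [IsProbabilityMeasure μ]
    {M α κ : ℝ} {N : ℕ} (h : AverageHolderLE α (ENNReal.ofReal κ) (mconvN μ N)) (hα : 0 ≤ α)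
    (hM : 1 ≤ M) (hμ : ∀ᵐ g ∂μ, NormBound M g) (hκ : 0 < κ) (hκ1 : κ ≤ 1) (hN : 1 ≤ N) (n : ℕ) :
    AverageHolderLE α (ENNReal.ofReal
      (((M ^ N) ^ 4) ^ α * κ⁻¹ * (κ ^ (-(1 / N : ℝ))) ^ (-(n : ℝ)))) (mconvN μ n) := by
  have remainder : AverageHolderLE α (ENNReal.ofReal (((M ^ N) ^ 4) ^ α)) (mconvN μ (n % N)) := by
    refine (AverageHolderLE.of_ae_normBound hα (ae_normBound_mconvN hμ (n % N))).mono ?_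
    rw [measure_univ, mul_one]
    gcongr
    exact (Nat.mod_lt n hN).le
  have product := (h.mconvN_mul (n / N)).mconv remainder
  rw [← mconvN_add, Nat.div_add_mod, ← ENNReal.ofReal_pow hκ.le,
    ← ENNReal.ofReal_mul (by positivity)] at product
  refine product.mono (ENNReal.ofReal_le_ofReal ?_)
  rw [mul_comm, mul_assoc]
  gcongr
  exact pow_div_le_inv_mul_rpow hκ hκ1 hN n

lemma AverageHolderLE.exists_stable {ν : Measure (GLd d)} [IsProbabilityMeasure ν] {M α κ : ℝ}
    {N : ℕ} (hν : AverageHolderLE α (ENNReal.ofReal κ) (mconvN ν N)) (hα : 0 ≤ α) (hκ : 0 ≤ κ)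
    {κ' : ℝ} (hκκ' : κ < κ') :
    ∃ ε : ℝ, 0 < ε ∧ ∀ (μ : Measure (GLd d)) [IsProbabilityMeasure μ],
      (∀ᵐ g ∂μ, NormBound M g) → tvDist μ ν < ε →
        AverageHolderLE α (ENNReal.ofReal κ') (mconvN μ N) := by
  set D : ℝ := ((M ^ N) ^ 4) ^ α * N
  have hD : 0 < 1 + D := by positivity
  have hε : 0 < (κ' - κ) / (1 + D) := div_pos (sub_pos.2 hκκ') hD
  refine ⟨(κ' - κ) / (1 + D), hε, fun μ _ hμ htv => (hν.of_tvDist_le hα hμ htv.le).mono ?_⟩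
  have perturbation_le : D * ((κ' - κ) / (1 + D)) ≤ κ' - κ := by
    rw [← mul_div_assoc, div_le_iff₀ hD, mul_one_add, mul_comm]
    exact le_add_of_nonneg_left (sub_pos.2 hκκ').le
  rw [← ENNReal.ofReal_natCast, ← ENNReal.ofReal_mul (by positivity),
    ← ENNReal.ofReal_mul (by positivity), ← mul_assoc, ← ENNReal.ofReal_add hκ (by positivity)]
  exact ENNReal.ofReal_le_ofReal (by linarith)

theorem contraction_of_valpha
    (d : ℕ) (hd : 2 ≤ d) (S : Set (GLd d)) (hS : IsCompact S)
    (μ₀ : Measure (GLd d)) [IsProbabilityMeasure μ₀] (hμ₀S : μ₀ Sᶜ = 0)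
    (hqi : QuasiIrreducible μ₀) (hgap : L2 μ₀ < L1 μ₀) :
    ∃ α : ℝ, 0 < α ∧ α ≤ 1 ∧ ∃ θ : ℝ, 1 < θ ∧ ∃ C : ℝ, 0 < C ∧ ∃ ε : ℝ, 0 < ε ∧
      ∀ (μ : Measure (GLd d)) [IsProbabilityMeasure μ], μ Sᶜ = 0 →
        tvDist μ μ₀ < ε → ∀ n : ℕ, 1 ≤ n → ∀ φ : Pd d → ℝ, IsHolder α φ →
          valpha α ((Qop μ)^[n] φ) ≤ C * θ ^ (-(n : ℝ)) * valpha α φ := by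
  have : NeZero d := ⟨by omega⟩
  obtain ⟨M, hM⟩ := exists_normBound_of_isCompact hS
  have ae_bound (μ : Measure (GLd d)) (hμ : μ Sᶜ = 0) : ∀ᵐ g ∂μ, NormBound M g := by
    filter_upwards [show ∀ᵐ g ∂μ, g ∈ S from hμ] using hM
  obtain ⟨g₀, hg₀⟩ := (ae_bound μ₀ hμ₀S).exists
  obtain ⟨α, κ, hα, hα1, hκ, hκ1, N, hN, hcontr⟩ :=
    hqi.exists_averageHolderLE_mconvN hd (ae_bound μ₀ hμ₀S) hgap
  obtain ⟨κ', hκκ', hκ'1⟩ := exists_between hκ1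
  have hκ' : 0 < κ' := hκ.trans hκκ'
  obtain ⟨ε, hε, hstable⟩ := hcontr.exists_stable hα.le hκ.le hκκ'
  have hM1 : 1 ≤ M := hg₀.one_le
  have hθ : 1 < κ' ^ (-(1 / N : ℝ)) := Real.one_lt_rpow_of_pos_of_lt_one_of_neg hκ' hκ'1
    (neg_neg_of_pos (one_div_pos.2 (by exact_mod_cast hN)))
  refine ⟨α, hα, hα1, κ' ^ (-(1 / N : ℝ)), hθ, ((M ^ N) ^ 4) ^ α * κ'⁻¹, by positivity, ε, hε, ?_⟩
  intro μ _ hμS htv n _ φ hφ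
  have hμ := ae_bound μ hμS
  have hv := valpha_nonneg α φ
  have hcontr_n := (hstable μ hμ htv).mconvN_of_block hα.le hM1 hμ hκ' hκ'1.le hN n
  rw [hφ.holderBound_valpha.qop_iterate hα hv]
  exact (hφ.holderBound_valpha.qop hcontr_n hα hv (by positivity)).valpha_le (by positivity)

end
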